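/- arXiv:q-alg/9505024 — 4 statements merged into one kernel-verified Lean document; each statement's English description precedes it below -/
import Mathlib

section
/- Let A be a finite-dimensional Hopf algebra over a field k, with basis {a_t} of A and dual basis {x_t} of A*. In the Drinfeld double D(A), the element d₀ = Σ_t S²(a_t)·x_t is invertible with inverse d₀⁻¹ = Σ_t S⁻¹(a_t)·x_t. -/
/-- A finite-dimensional Hopf algebra over a field `k`, presented by structure
constants with respect to a finite basis indexed by `ι`.  The underlying space
of the Hopf algebra `A` is `ι → k` (with basis the delta functions `e i`), and
its dual Hopf algebra `A*` is also modelled on `ι → k` (using the dual basis).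

* `mul s t r` is the coefficient of `e r` in `e s * e t`;
* `one` is the coefficient vector of the unit of `A`;
* `comul r s t` is the coefficient of `e s ⊗ e t` in `Δ (e r)`;
* `counit t` is `ε (e t)`;
* `S t r` is the coefficient of `e r` in the antipode `S (e t)`, and `Sinv` is
  the matrix of the (composition) inverse of the antipode.

The axioms express associativity, unitality, coassociativity, counitality,
that `Δ` and `ε` are algebra maps, the antipode identities, and that `Sinv`
is inverse to `S`. -/
structure FinHopfSC (k : Type*) [Field k] (ι : Type*) [Fintype ι] [DecidableEq ι] where
  mul : ι → ι → ι → k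
  one : ι → k
  comul : ι → ι → ι → k
  counit : ι → k
  S : ι → ι → k
  Sinv : ι → ι → k
  assoc : ∀ a b c r, (∑ s, mul a b s * mul s c r) = ∑ s, mul b c s * mul a s r
  one_mul : ∀ b r, (∑ s, one s * mul s b r) = if b = r then 1 else 0
  mul_one : ∀ a r, (∑ s, one s * mul a s r) = if a = r then 1 else 0
  coassoc : ∀ r a b c, (∑ s, comul r s c * comul s a b) = ∑ s, comul r a s * comul s b c
  counit_comul : ∀ r t, (∑ s, comul r s t * counit s) = if r = t then 1 else 0
  comul_counit : ∀ r t, (∑ s, comul r t s * counit s) = if r = t then 1 else 0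
  comul_mul : ∀ a b s t, (∑ r, mul a b r * comul r s t) =
      ∑ a1, ∑ a2, ∑ b1, ∑ b2, comul a a1 a2 * comul b b1 b2 * mul a1 b1 s * mul a2 b2 t
  counit_mul : ∀ a b, (∑ r, mul a b r * counit r) = counit a * counit b
  comul_one : ∀ s t, (∑ r, one r * comul r s t) = one s * one t
  counit_one : (∑ r, one r * counit r) = 1
  antipode_left : ∀ r t, (∑ a, ∑ b, ∑ s, comul r a b * S a s * mul s b t) = counit r * one t
  antipode_right : ∀ r t, (∑ a, ∑ b, ∑ s, comul r a b * S b s * mul a s t) = counit r * one t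
  S_Sinv : ∀ a r, (∑ s, S a s * Sinv s r) = if a = r then 1 else 0
  Sinv_S : ∀ a r, (∑ s, Sinv a s * S s r) = if a = r then 1 else 0

namespace FinHopfSC

variable {k : Type*} [Field k] {ι : Type*} [Fintype ι] [DecidableEq ι]
variable (H : FinHopfSC k ι)

/-- the `i`-th basis vector `a_i` of `A` (equally, the `i`-th dual basis vector
`x_i` of `A*`). -/
def e (i : ι) : ι → k := fun j => if i = j then 1 else 0

/-- the product of `A`. -/
def mulA (a b : ι → k) : ι → k := fun r => ∑ s, ∑ t, a s * b t * H.mul s t r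

/-- the unit of `A`. -/
def oneA : ι → k := H.one

/-- the (convolution) product of the dual Hopf algebra `A*`:
`⟨x y, a⟩ = ⟨x ⊗ y, Δ a⟩`. -/
def mulX (x y : ι → k) : ι → k := fun r => ∑ s, ∑ t, H.comul r s t * x s * y t

/-- the unit of `A*` (the counit of `A`). -/
def oneX : ι → k := H.counit

/-- the antipode of `A`. -/
def SA (a : ι → k) : ι → k := fun r => ∑ t, a t * H.S t r

/-- the inverse of the antipode of `A`. -/
def SAinv (a : ι → k) : ι → k := fun r => ∑ t, a t * H.Sinv t r

/-- the antipode of `A*` (the transpose of the antipode of `A`). -/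
def SX (x : ι → k) : ι → k := fun t => ∑ r, H.S t r * x r

/-- the inverse of the antipode of `A*`. -/
def SXinv (x : ι → k) : ι → k := fun t => ∑ r, H.Sinv t r * x r

/-- the left regular action `a ⇀ x = x₍₁₎ ⟨x₍₂₎, a⟩` of `A` on `A*`, i.e.
`⟨a ⇀ x, b⟩ = ⟨x, b a⟩`. -/
def hit (a x : ι → k) : ι → k := fun r => ∑ s, ∑ t, a s * H.mul r s t * x t

/-- the left adjoint action `ad_x y = x₍₂₎ y S⁻¹(x₍₁₎)` of `A*` (as the Hopf
algebra `A*` with the opposite coproduct) on `A*`. -/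
def adX (x y : ι → k) : ι → k := fun r =>
  ∑ p, ∑ a, ∑ b, H.mul a b p * x p * (H.mulX (e b) (H.mulX y (H.SXinv (e a)))) r

end FinHopfSC

namespace FinHopfSC

variable {k : Type*} [Field k] {ι : Type*} [Fintype ι] [DecidableEq ι]
variable (H : FinHopfSC k ι)

/-- the element `a_a ▷ x_d = (a_a)₍₁₎ ⇀ x_d ↼ S⁻¹((a_a)₍₂₎)` of `A*`
(the left coadjoint action of `A` on `A*`), written in coordinates. -/
def rtri (a d : ι) : ι → k := fun d' =>
  ∑ m, ∑ n, ∑ u, ∑ w, H.comul a m n * H.mul u m d * H.Sinv n w * H.mul w d' u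

/-- the element `a_b ◁ x_c = S⁻¹((x_c)₍₁₎) ⇀ a_b ↼ (x_c)₍₂₎` of `A`
(the right coadjoint action of `A*` on `A`), written in coordinates. -/
def ltri (b c : ι) : ι → k := fun p' =>
  ∑ g, ∑ h1, ∑ b2, ∑ q', H.mul g h1 c * H.comul b h1 b2 * H.comul b2 p' q' * H.Sinv q' g

end FinHopfSC

/-!
Write `J` for the inclusion of `A` and `R = ∑ t, a t ⊗ x t`. Conjugating `b ↦ R` and `b ↦ 1 ⊗ J b`
by `b ↦ b ⊗ 1` in the convolution algebra of maps `A → Aᵐᵒᵖ ⊗ D` produces the two coadjoint actions,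
so the double cross-product relation says precisely that `Δᵒᵖ(b) R = R Δ(b)`. Contracting this
identity shows that `v = ∑ t, S⁻¹(a t) x t` and `d = ∑ t, S²(a t) x t` satisfy
`S⁻¹(b) v = v S(b)` and `d b = S²(b) d`. Hence `v d = ∑ t, a t v x t` and
`d v = ∑ t, S(a t) d x t`, and since `(Δ ⊗ id) R = R₁₃ R₂₃` both collapse to `(ε ⊗ id) R = 1` by the
antipode axioms.
-/

open Coalgebra HopfAlgebra LinearMap MulOpposite TensorProduct WithConv Module

theorem mul_mul_eq_of_eq_conj_mul_conj {M : Type*} [Monoid M] {u v r b : M} (huv : v * u = 1)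
    (h : b * r = u * r * v * (u * (b * v))) : b * r * u = u * r * b := by
  have hcancel (m : M) : v * (u * m) = m := by rw [← mul_assoc, huv, one_mul]
  rw [h]
  simp only [mul_assoc, huv, hcancel, mul_one]

section AntipodeInverse

variable {k A ι : Type*} [CommSemiring k] [Semiring A] [HopfAlgebra k A] {T : A → A}

theorem antipodeInv_mul (hTS : Function.LeftInverse T (antipode k))
    (hST : Function.RightInverse T (antipode k)) (a b : A) : T (a * b) = T b * T a :=
  hTS.injective.eq_iff.mp <| by rw [antipode_mul_antidistrib, hST, hST, hST]

theorem sum_antipodeInv_mul_eq_smul (hTS : Function.LeftInverse T (antipode k))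
    (hST : Function.RightInverse T (antipode k)) {b : A} (r : Coalgebra.Repr k b ι) :
    ∑ i ∈ r.index, T (r.right i) * r.left i = Coalgebra.counit (R := k) b • 1 := by
  apply hTS.injective
  simp [antipode_mul_antidistrib, hST _, sum_antipode_mul_eq_smul]

theorem sum_mul_antipodeInv_eq_smul (hTS : Function.LeftInverse T (antipode k))
    (hST : Function.RightInverse T (antipode k)) {b : A} (r : Coalgebra.Repr k b ι) :
    ∑ i ∈ r.index, r.right i * T (r.left i) = Coalgebra.counit (R := k) b • 1 := by
  apply hTS.injective
  simp [antipode_mul_antidistrib, hST _, sum_mul_antipode_eq_smul]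

end AntipodeInverse

section Convolution

variable {k C Q : Type*} [CommSemiring k] [AddCommMonoid C] [Module k C] [Coalgebra k C]
  [Semiring Q] [Algebra k Q]

/-- The convolution element `b ↦ ε(b) w`, through which an element `w` of `Q` multiplies the
convolution algebra of maps `C → Q`. -/
def convConst (w : Q) : WithConv (C →ₗ[k] Q) :=
  toConv (toSpanSingleton k Q w ∘ₗ counit)

theorem convConst_mul_apply (w : Q) (f : WithConv (C →ₗ[k] Q)) (b : C) :
    (convConst w * f : WithConv (C →ₗ[k] Q)) b = w * f b := by
  conv_rhs => rw [← one_mul f]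
  rw [(ℛ k b).convMul_apply, (ℛ k b).convMul_apply]
  simp [convConst, Finset.mul_sum, Algebra.algebraMap_eq_smul_one]

theorem mul_convConst_apply (f : WithConv (C →ₗ[k] Q)) (w : Q) (b : C) :
    (f * convConst w : WithConv (C →ₗ[k] Q)) b = f b * w := by
  conv_rhs => rw [← mul_one f]
  rw [(ℛ k b).convMul_apply, (ℛ k b).convMul_apply]
  simp [convConst, Finset.sum_mul, Algebra.algebraMap_eq_smul_one]

end Convolution

section AlgHom

variable {k A B : Type*} [CommSemiring k] [Semiring A] [HopfAlgebra k A] [Semiring B] [Algebra k B]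

theorem toConv_mul_toConv_comp_antipode (f : A →ₐ[k] B) :
    toConv f.toLinearMap * toConv (f.toLinearMap ∘ₗ antipode k) = 1 := by
  have h := algHom_comp_convMul_distrib f (toConv LinearMap.id) (toConv (antipode k (A := A)))
  rw [id_mul_antipode] at h
  ext b
  simpa [LinearMap.convOne_def] using (LinearMap.congr_fun h b).symm

theorem toConv_comp_antipode_mul_toConv (f : A →ₐ[k] B) :
    toConv (f.toLinearMap ∘ₗ antipode k) * toConv f.toLinearMap = 1 := by
  have h := algHom_comp_convMul_distrib f (toConv (antipode k (A := A))) (toConv LinearMap.id)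
  rw [antipode_mul_id] at h
  ext b
  simpa [LinearMap.convOne_def] using (LinearMap.congr_fun h b).symm

end AlgHom

section Contraction

variable {k A D : Type*} [CommSemiring k] [Semiring A] [Algebra k A] [Semiring D] [Algebra k D]

/-- The contraction `a ⊗ y ↦ F a * y` of `Aᵐᵒᵖ ⊗ D` to `D` along a linear map `F : A → D`. -/
noncomputable def contract (F : A →ₗ[k] D) : Aᵐᵒᵖ ⊗[k] D →ₗ[k] D :=
  mul' k D ∘ₗ TensorProduct.map (F ∘ₗ (opLinearEquiv k).symm.toLinearMap) LinearMap.id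

@[simp]
theorem contract_op_tmul (F : A →ₗ[k] D) (a : A) (y : D) :
    contract F (op a ⊗ₜ y) = F a * y := rfl

theorem contract_mul_one_tmul (F : A →ₗ[k] D) (q : Aᵐᵒᵖ ⊗[k] D) (y : D) :
    contract F (q * 1 ⊗ₜ y) = contract F q * y := by
  induction q with
  | zero => simp
  | tmul a z => simp [contract, mul_assoc]
  | add p q hp hq => simp only [add_mul, map_add, hp, hq]

end Contraction

section OpTensor

variable {k A D : Type*} [CommSemiring k] [Semiring A] [Algebra k A] [Semiring D] [Algebra k D]

/-- The inclusion `b ↦ b ⊗ 1` of `A` into `Aᵐᵒᵖ ⊗ D`, as an element of the convolution algebra. -/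
noncomputable def convOp (k A D : Type*) [CommSemiring k] [Semiring A] [Algebra k A] [Semiring D]
    [Algebra k D] : WithConv (A →ₗ[k] Aᵐᵒᵖ ⊗[k] D) :=
  toConv (Algebra.TensorProduct.includeLeft.toLinearMap ∘ₗ (opLinearEquiv k).toLinearMap)

theorem convOp_apply (b : A) : convOp k A D b = op b ⊗ₜ 1 := rfl

/-- The map `b ↦ T b ⊗ 1` from `A` to `Aᵐᵒᵖ ⊗ D`, as an element of the convolution algebra; it is
the convolution inverse of `convOp` when `T` is the inverse of the antipode. -/
noncomputable def convOpInv (T : A →ₗ[k] A) : WithConv (A →ₗ[k] Aᵐᵒᵖ ⊗[k] D) :=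
  toConv ((convOp k A D).ofConv ∘ₗ T)

theorem convOpInv_apply (T : A →ₗ[k] A) (b : A) : convOpInv (D := D) T b = op (T b) ⊗ₜ 1 := rfl

/-- The algebra map `b ↦ 1 ⊗ J b` from `A` to `Aᵐᵒᵖ ⊗ D`. -/
noncomputable def rightHom (J : A →ₐ[k] D) : A →ₐ[k] Aᵐᵒᵖ ⊗[k] D :=
  Algebra.TensorProduct.includeRight.comp J

theorem rightHom_apply (J : A →ₐ[k] D) (b : A) : rightHom J b = 1 ⊗ₜ J b := rfl

/-- The element `∑ t, a t ⊗ x t` of `Aᵐᵒᵖ ⊗ D`. -/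
noncomputable def opTensor (k : Type*) {A D ι : Type*} [CommSemiring k] [Semiring A]
    [Algebra k A] [Semiring D] [Algebra k D] [Fintype ι] (a : ι → A) (x : ι → D) : Aᵐᵒᵖ ⊗[k] D :=
  ∑ t, op (a t) ⊗ₜ x t

end OpTensor

section RMatrix

variable {k A D ι : Type*} [CommSemiring k] [Semiring A] [Bialgebra k A] [Semiring D] [Algebra k D]

theorem contract_conv {J : A →ₐ[k] D} {F : A →ₗ[k] D} {f : WithConv (A →ₗ[k] Aᵐᵒᵖ ⊗[k] D)} {v : D}
    (hf : ∀ b, contract F (f b) = Coalgebra.counit (R := k) b • v) (g : A →ₗ[k] A) (b : A) :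
    contract F ((f * toConv ((rightHom J).toLinearMap ∘ₗ g) :
      WithConv (A →ₗ[k] Aᵐᵒᵖ ⊗[k] D)) b) = v * J (g b) := by
  rw [(ℛ k b).convMul_apply, map_sum]
  calc _ = ∑ i ∈ (ℛ k b).index, contract F (f ((ℛ k b).left i)) * J (g ((ℛ k b).right i)) :=
        Finset.sum_congr rfl fun i _ => contract_mul_one_tmul F _ _
    _ = v * J (g (∑ i ∈ (ℛ k b).index,
          Coalgebra.counit (R := k) ((ℛ k b).left i) • (ℛ k b).right i)) := by
        simp [hf, map_sum, Finset.mul_sum]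
    _ = v * J (g b) := by rw [sum_counit_smul]

/-- The element `R = ∑ t, a t ⊗ x t` behaves like the canonical R-matrix of a Drinfeld double `D` of
`A`, with `J` the inclusion of `A`: `(Δ ⊗ id) R = R₁₃ R₂₃`, `(ε ⊗ id) R = 1`, and
`∑ t, b₍₂₎ a t ⊗ J b₍₁₎ x t = ∑ t, a t b₍₁₎ ⊗ x t J b₍₂₎`. The last condition is written for maps
`A → Aᵐᵒᵖ ⊗ D`, because reversing the products of `A` puts both sides in the order of a
convolution product. -/
structure IsRMatrix [Fintype ι] (J : A →ₐ[k] D) (a : ι → A) (x : ι → D) : Prop where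
  comul : ∑ t, comul (R := k) (a t) ⊗ₜ[k] x t = ∑ s, ∑ t, (a s ⊗ₜ[k] a t) ⊗ₜ[k] (x s * x t)
  counit : ∑ t, counit (R := k) (a t) • x t = 1
  intertwine : toConv (rightHom J).toLinearMap * convConst (opTensor k a x) * convOp k A D =
    convOp k A D * convConst (opTensor k a x) * toConv (rightHom J).toLinearMap

theorem IsRMatrix.sum_mul_eq_one [Fintype ι] {J : A →ₐ[k] D} {a : ι → A} {x : ι → D}
    (h : IsRMatrix J a x) {F : A ⊗[k] A →ₗ[k] D}
    (hF : ∀ b, F (Coalgebra.comul b) = Coalgebra.counit (R := k) b • 1) :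
    ∑ s, ∑ t, F (a s ⊗ₜ a t) * (x s * x t) = 1 := by
  have := congrArg (mul' k D ∘ₗ TensorProduct.map F LinearMap.id) h.comul
  simpa [hF, h.counit] using this.symm

end RMatrix

section RMatrixInverse

variable {k A D ι : Type*} [CommSemiring k] [Semiring A] [HopfAlgebra k A] [Semiring D]
  [Algebra k D] {J : A →ₐ[k] D} {T : A →ₗ[k] A}

theorem convOpInv_mul_convOp (hTS : Function.LeftInverse T (antipode k))
    (hST : Function.RightInverse T (antipode k)) : convOpInv T * convOp k A D = 1 := by
  ext b
  rw [(ℛ k b).convMul_apply]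
  simp only [convOpInv_apply, convOp_apply, Algebra.TensorProduct.tmul_mul_tmul, ← op_mul,
    ← sum_tmul, ← Finset.op_sum, sum_mul_antipodeInv_eq_smul hTS hST, mul_one]
  simp [LinearMap.convOne_def, Algebra.algebraMap_eq_smul_one, ← smul_tmul',
    Algebra.TensorProduct.one_def]

variable [Fintype ι] {a : ι → A} {x : ι → D}

theorem contract_antipodeInv_conv (hTS : Function.LeftInverse T (antipode k))
    (hST : Function.RightInverse T (antipode k)) (b : A) :
    contract (J.toLinearMap ∘ₗ T)
      ((toConv (rightHom J).toLinearMap * convConst (opTensor k a x) * convOp k A D :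
        WithConv (A →ₗ[k] Aᵐᵒᵖ ⊗[k] D)) b) =
      Coalgebra.counit (R := k) b • ∑ t, J (T (a t)) * x t := by
  have contract_term (c d : A) : contract (J.toLinearMap ∘ₗ T)
      (rightHom J c * opTensor k a x * convOp k A D d) =
        ∑ t, J (T (a t)) * J (T d * c) * x t := by
    simp [opTensor, rightHom_apply, convOp_apply, Finset.mul_sum, Finset.sum_mul, ← op_mul,
      antipodeInv_mul hTS hST, mul_assoc]
  rw [(ℛ k b).convMul_apply, map_sum]
  simp only [mul_convConst_apply, AlgHom.toLinearMap_apply, contract_term]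
  rw [Finset.sum_comm]
  simp only [← Finset.mul_sum, ← Finset.sum_mul, ← map_sum, sum_antipodeInv_mul_eq_smul hTS hST]
  simp [Finset.smul_sum]

theorem contract_antipode_sq_conv (b : A) :
    contract (J.toLinearMap ∘ₗ antipode k ∘ₗ antipode k)
      ((toConv ((rightHom J).toLinearMap ∘ₗ antipode k) * convOp k A D *
        convConst (opTensor k a x) : WithConv (A →ₗ[k] Aᵐᵒᵖ ⊗[k] D)) b) =
      Coalgebra.counit (R := k) b • ∑ t, J (antipode k (antipode k (a t))) * x t := by
  have contract_term (c d : A) : contract (J.toLinearMap ∘ₗ antipode k ∘ₗ antipode k)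
      (rightHom J (antipode k c) * convOp k A D d * opTensor k a x) =
        ∑ t, J (antipode k (antipode k (a t))) * J (antipode k (c * antipode k d)) * x t := by
    simp [opTensor, rightHom_apply, convOp_apply, Finset.mul_sum, ← op_mul,
      antipode_mul_antidistrib, mul_assoc]
  rw [mul_convConst_apply, (ℛ k b).convMul_apply, Finset.sum_mul, map_sum]
  simp only [LinearMap.comp_apply, AlgHom.toLinearMap_apply, contract_term]
  rw [Finset.sum_comm]
  simp only [← Finset.mul_sum, ← Finset.sum_mul, ← map_sum, sum_mul_antipode_eq_smul]
  simp [Finset.smul_sum]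

namespace IsRMatrix

theorem antipodeInv_mul_sum_antipodeInv (h : IsRMatrix J a x)
    (hTS : Function.LeftInverse T (antipode k)) (hST : Function.RightInverse T (antipode k))
    (b : A) :
    J (T b) * ∑ t, J (T (a t)) * x t = (∑ t, J (T (a t)) * x t) * J (antipode k b) := by
  have hconv : toConv (rightHom J).toLinearMap * convConst (opTensor k a x) * convOp k A D *
      toConv ((rightHom J).toLinearMap ∘ₗ antipode k) =
        convOp k A D * convConst (opTensor k a x) := by
    rw [h.intertwine, mul_assoc, toConv_mul_toConv_comp_antipode, mul_one]
  calc _ = contract (J.toLinearMap ∘ₗ T) (convOp k A D b * opTensor k a x) := by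
        simp [opTensor, convOp_apply, Finset.mul_sum, ← op_mul, antipodeInv_mul hTS hST, mul_assoc]
    _ = _ := by
        rw [← mul_convConst_apply, ← hconv, contract_conv (contract_antipodeInv_conv hTS hST)]

theorem sum_antipode_sq_mul (h : IsRMatrix J a x) (b : A) :
    (∑ t, J (antipode k (antipode k (a t))) * x t) * J b =
      J (antipode k (antipode k b)) * ∑ t, J (antipode k (antipode k (a t))) * x t := by
  have hconv : toConv ((rightHom J).toLinearMap ∘ₗ antipode k) * convOp k A D *
      convConst (opTensor k a x) * toConv ((rightHom J).toLinearMap ∘ₗ LinearMap.id) =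
        convConst (opTensor k a x) * convOp k A D := by
    rw [LinearMap.comp_id, mul_assoc, mul_assoc, ← mul_assoc (convOp k A D), ← h.intertwine,
      ← mul_assoc, ← mul_assoc, toConv_comp_antipode_mul_toConv, one_mul]
  symm
  calc _ = contract (J.toLinearMap ∘ₗ antipode k ∘ₗ antipode k)
          (opTensor k a x * convOp k A D b) := by
        simp [opTensor, convOp_apply, Finset.mul_sum, Finset.sum_mul, ← op_mul,
          antipode_mul_antidistrib, mul_assoc]
    _ = _ := by
        rw [← convConst_mul_apply, ← hconv, contract_conv contract_antipode_sq_conv,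
          LinearMap.id_apply]

theorem sum_antipodeInv_mul_sum_antipode_sq (h : IsRMatrix J a x)
    (hTS : Function.LeftInverse T (antipode k)) (hST : Function.RightInverse T (antipode k)) :
    (∑ t, J (T (a t)) * x t) * (∑ t, J (antipode k (antipode k (a t))) * x t) = 1 := by
  let F : A ⊗[k] A →ₗ[k] D :=
    J.toLinearMap ∘ₗ mul' k A ∘ₗ T.lTensor A ∘ₗ (TensorProduct.comm k A A).toLinearMap
  have hF (b : A) : F (Coalgebra.comul b) = Coalgebra.counit (R := k) b • 1 := by
    rw [← (ℛ k b).eq]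
    simpa [F] using congrArg J (sum_mul_antipodeInv_eq_smul hTS hST (ℛ k b))
  calc _ = ∑ t, J (a t) * (∑ s, J (T (a s)) * x s) * x t := by
        simp only [Finset.mul_sum, ← mul_assoc, ← h.antipodeInv_mul_sum_antipodeInv hTS hST, hTS _]
    _ = ∑ s, ∑ t, F (a s ⊗ₜ a t) * (x s * x t) := by
        rw [Finset.sum_comm]
        simp [F, Finset.mul_sum, Finset.sum_mul, mul_assoc]
    _ = 1 := h.sum_mul_eq_one hF

theorem sum_antipode_sq_mul_sum_antipodeInv (h : IsRMatrix J a x)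
    (hST : Function.RightInverse T (antipode k)) :
    (∑ t, J (antipode k (antipode k (a t))) * x t) * (∑ t, J (T (a t)) * x t) = 1 := by
  let F : A ⊗[k] A →ₗ[k] D :=
    J.toLinearMap ∘ₗ antipode k ∘ₗ mul' k A ∘ₗ (antipode k).rTensor A
  have hF (b : A) : F (Coalgebra.comul b) = Coalgebra.counit (R := k) b • 1 := by
    simp [F, Algebra.algebraMap_eq_smul_one]
  calc _ = ∑ s, J (antipode k (a s)) * (∑ t, J (antipode k (antipode k (a t))) * x t) * x s := by
        simp only [Finset.mul_sum, ← mul_assoc, h.sum_antipode_sq_mul, hST _]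
    _ = ∑ s, ∑ t, F (a s ⊗ₜ a t) * (x s * x t) := by
        rw [Finset.sum_comm]
        simp [F, Finset.mul_sum, Finset.sum_mul, mul_assoc, antipode_mul_antidistrib]
    _ = 1 := h.sum_mul_eq_one hF

end IsRMatrix

end RMatrixInverse

namespace FinHopfSC

variable {k : Type*} [Field k] {ι : Type*} [Fintype ι] [DecidableEq ι]

theorem sum_smul_e (f : ι → k) : ∑ i, f i • e i = f :=
  (pi_eq_sum_univ f).symm

variable (H : FinHopfSC k ι)

/-- The product `mulA` of `A` as a bilinear map, which supplies distributivity and compatibility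
with scalars for the ring structure on `Carrier`. -/
def mulHom : (ι → k) →ₗ[k] (ι → k) →ₗ[k] (ι → k) :=
  LinearMap.mk₂ k H.mulA
    (fun a b c => by funext r; simp [mulA, add_mul, Finset.sum_add_distrib])
    (fun z a b => by funext r; simp [mulA, Finset.mul_sum, mul_assoc])
    (fun a b c => by funext r; simp [mulA, mul_add, add_mul, Finset.sum_add_distrib])
    (fun z a b => by funext r; simp [mulA, Finset.mul_sum, mul_assoc, mul_left_comm])

theorem mulA_e_e (s t : ι) : H.mulA (e s) (e t) = ∑ r, H.mul s t r • e r := by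
  rw [sum_smul_e]
  funext r
  simp [mulA, e]

theorem SA_e (t : ι) : H.SA (e t) = ∑ r, H.S t r • e r := by
  rw [sum_smul_e]
  funext r
  simp [SA, e]

theorem SAinv_e (t : ι) : H.SAinv (e t) = ∑ r, H.Sinv t r • e r := by
  rw [sum_smul_e]
  funext r
  simp [SAinv, e]

/-- The underlying space of the Hopf algebra `A`. It is a synonym of `ι → k`, so that the product of
`A` does not clash with the pointwise product of functions. -/
def Carrier (_ : FinHopfSC k ι) : Type _ := ι → k

instance : AddCommGroup H.Carrier := inferInstanceAs (AddCommGroup (ι → k))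
instance : Module k H.Carrier := inferInstanceAs (Module k (ι → k))

/-- The basis of `A` to which the structure constants refer. -/
noncomputable def basis : Basis ι k H.Carrier := Pi.basisFun k ι

theorem basis_apply (i : ι) : H.basis i = (e i : ι → k) := by
  have h : Pi.single i 1 = (e i : ι → k) := by
    funext j
    simp [e, Pi.single_apply, eq_comm]
  exact (Pi.basisFun_apply k ι i).trans h

instance : NonUnitalNonAssocRing H.Carrier where
  mul a b := H.mulHom a b
  left_distrib a b c := map_add (H.mulHom a) b c
  right_distrib a b c := map_add₂ H.mulHom a b c
  zero_mul a := map_zero₂ H.mulHom a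
  mul_zero a := map_zero (H.mulHom a)

instance : SMulCommClass k H.Carrier H.Carrier where
  smul_comm z a b := (map_smul (H.mulHom a) z b).symm

instance : IsScalarTower k H.Carrier H.Carrier where
  smul_assoc z a b := map_smul₂ H.mulHom z a b

theorem basis_mul_basis (s t : ι) : H.basis s * H.basis t = ∑ r, H.mul s t r • H.basis r := by
  simp only [basis_apply]
  exact H.mulA_e_e s t

theorem carrier_mul_assoc (a b c : H.Carrier) : a * b * c = a * (b * c) := by
  suffices h : (LinearMap.mul k H.Carrier).compr₂ (LinearMap.mul k H.Carrier) =
      (llcomp k H.Carrier H.Carrier H.Carrier ∘ₗ LinearMap.mul k H.Carrier).compl₂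
        (LinearMap.mul k H.Carrier) from LinearMap.congr_fun (congr($h a b)) c
  refine H.basis.ext fun s => H.basis.ext fun t => H.basis.ext fun u => H.basis.ext_elem fun r => ?_
  simpa [basis_mul_basis, Finset.sum_mul, Finset.mul_sum, Finsupp.single_apply]
    using H.assoc s t u r

instance : One H.Carrier := ⟨H.oneA⟩

theorem one_eq_sum_basis : (1 : H.Carrier) = ∑ r, H.one r • H.basis r := by
  simp only [basis_apply]
  exact (sum_smul_e H.one).symm

theorem carrier_one_mul (a : H.Carrier) : 1 * a = a := by
  suffices h : LinearMap.mul k H.Carrier 1 = LinearMap.id from LinearMap.congr_fun h a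
  refine H.basis.ext fun t => H.basis.ext_elem fun r => ?_
  simpa [one_eq_sum_basis, basis_mul_basis, Finset.sum_mul, Finsupp.single_apply]
    using H.one_mul t r

theorem carrier_mul_one (a : H.Carrier) : a * 1 = a := by
  suffices h : (LinearMap.mul k H.Carrier).flip 1 = LinearMap.id from LinearMap.congr_fun h a
  refine H.basis.ext fun t => H.basis.ext_elem fun r => ?_
  simpa [one_eq_sum_basis, basis_mul_basis, Finset.mul_sum, Finsupp.single_apply]
    using H.mul_one t r

instance : Ring H.Carrier where
  __ := (inferInstance : NonUnitalNonAssocRing H.Carrier)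
  mul_assoc := H.carrier_mul_assoc
  one_mul := H.carrier_one_mul
  mul_one := H.carrier_mul_one

instance : Algebra k H.Carrier := Algebra.ofModule smul_mul_assoc mul_smul_comm

noncomputable instance : CoalgebraStruct k H.Carrier where
  comul := H.basis.constr k fun r => ∑ s, ∑ t, H.comul r s t • (H.basis s ⊗ₜ[k] H.basis t)
  counit := H.basis.constr k H.counit

theorem comul_basis (r : ι) : Coalgebra.comul (R := k) (H.basis r) =
    ∑ s, ∑ t, H.comul r s t • (H.basis s ⊗ₜ[k] H.basis t) :=
  H.basis.constr_basis k _ r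

theorem counit_basis (r : ι) : Coalgebra.counit (R := k) (H.basis r) = H.counit r :=
  H.basis.constr_basis k _ r

noncomputable instance : Coalgebra k H.Carrier where
  coassoc := by
    refine H.basis.ext fun r => (H.basis.tensorProduct (H.basis.tensorProduct H.basis)).ext_elem ?_
    rintro ⟨a, b, c⟩
    simpa [comul_basis, sum_tmul, tmul_sum, ← smul_tmul', Finset.smul_sum, Finsupp.single_apply]
      using H.coassoc r a b c
  rTensor_counit_comp_comul := by
    refine H.basis.ext fun r => ((Basis.singleton Unit k).tensorProduct H.basis).ext_elem ?_
    rintro ⟨-, t⟩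
    simpa [comul_basis, counit_basis, Finsupp.single_apply] using H.counit_comul r t
  lTensor_counit_comp_comul := by
    refine H.basis.ext fun r => (H.basis.tensorProduct (Basis.singleton Unit k)).ext_elem ?_
    rintro ⟨t, -⟩
    simpa [comul_basis, counit_basis, Finsupp.single_apply] using H.comul_counit r t

theorem carrier_counit_one : Coalgebra.counit (R := k) (1 : H.Carrier) = 1 := by
  simpa [one_eq_sum_basis, counit_basis] using H.counit_one

theorem carrier_counit_mul (a b : H.Carrier) : Coalgebra.counit (R := k) (a * b) =
    Coalgebra.counit (R := k) a * Coalgebra.counit (R := k) b := by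
  suffices h : (LinearMap.mul k H.Carrier).compr₂ Coalgebra.counit =
      (LinearMap.mul k k).compl₁₂ Coalgebra.counit Coalgebra.counit from congr($h a b)
  refine H.basis.ext fun s => H.basis.ext fun t => ?_
  simpa [basis_mul_basis, counit_basis] using H.counit_mul s t

theorem carrier_comul_one : Coalgebra.comul (R := k) (1 : H.Carrier) = 1 := by
  refine (H.basis.tensorProduct H.basis).ext_elem ?_
  rintro ⟨s, t⟩
  simpa [one_eq_sum_basis, comul_basis, Algebra.TensorProduct.one_def, Finset.smul_sum,
    Finsupp.single_apply, mul_comm] using H.comul_one s t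

theorem carrier_comul_mul (a b : H.Carrier) : Coalgebra.comul (R := k) (a * b) =
    Coalgebra.comul (R := k) a * Coalgebra.comul (R := k) b := by
  suffices h : (LinearMap.mul k H.Carrier).compr₂ Coalgebra.comul =
      (LinearMap.mul k (H.Carrier ⊗[k] H.Carrier)).compl₁₂ Coalgebra.comul Coalgebra.comul from
    congr($h a b)
  refine H.basis.ext fun u => H.basis.ext fun v => (H.basis.tensorProduct H.basis).ext_elem ?_
  rintro ⟨s, t⟩
  simp only [compr₂_apply, compl₁₂_apply, mul_apply', comul_basis, basis_mul_basis, Finset.sum_mul]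
  simp only [Finset.mul_sum, smul_mul_smul_comm, Algebra.TensorProduct.tmul_mul_tmul,
    basis_mul_basis]
  simpa [comul_basis, Finset.smul_sum, Finsupp.single_apply, mul_assoc, mul_comm, mul_left_comm]
    using H.comul_mul u v s t

noncomputable instance : Bialgebra k H.Carrier :=
  Bialgebra.mk' k H.Carrier H.carrier_counit_one (H.carrier_counit_mul _ _) H.carrier_comul_one
    (H.carrier_comul_mul _ _)

/-- The antipode of `A` as a linear map, definitionally `SA`. -/
def antipodeHom : H.Carrier →ₗ[k] H.Carrier :=
  (Matrix.of H.S).vecMulLinear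

/-- The inverse of the antipode of `A` as a linear map, definitionally `SAinv`. -/
def antipodeInvHom : H.Carrier →ₗ[k] H.Carrier :=
  (Matrix.of H.Sinv).vecMulLinear

theorem antipodeHom_basis (t : ι) : H.antipodeHom (H.basis t) = ∑ r, H.S t r • H.basis r := by
  simp only [basis_apply]
  exact H.SA_e t

theorem antipodeInvHom_basis (t : ι) :
    H.antipodeInvHom (H.basis t) = ∑ r, H.Sinv t r • H.basis r := by
  simp only [basis_apply]
  exact H.SAinv_e t

noncomputable instance : HopfAlgebra k H.Carrier where
  antipode := H.antipodeHom
  mul_antipode_rTensor_comul := by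
    refine H.basis.ext fun r => H.basis.ext_elem fun t => ?_
    simpa [comul_basis, antipodeHom_basis, basis_mul_basis, counit_basis, one_eq_sum_basis,
      Finset.sum_mul, Finset.mul_sum, Finset.smul_sum, Finsupp.single_apply, sum_tmul,
      ← smul_tmul', Algebra.algebraMap_eq_smul_one, mul_assoc] using H.antipode_left r t
  mul_antipode_lTensor_comul := by
    refine H.basis.ext fun r => H.basis.ext_elem fun t => ?_
    simpa [comul_basis, antipodeHom_basis, basis_mul_basis, counit_basis, one_eq_sum_basis,
      Finset.sum_mul, Finset.mul_sum, Finset.smul_sum, Finsupp.single_apply, tmul_sum,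
      Algebra.algebraMap_eq_smul_one, mul_assoc] using H.antipode_right r t

theorem antipodeInv_antipode (a : H.Carrier) : H.antipodeInvHom (antipode k a) = a := by
  suffices h : H.antipodeInvHom ∘ₗ H.antipodeHom = LinearMap.id from LinearMap.congr_fun h a
  refine H.basis.ext fun t => H.basis.ext_elem fun r => ?_
  simpa [antipodeHom_basis, antipodeInvHom_basis, Finsupp.single_apply] using H.S_Sinv t r

theorem antipode_antipodeInv (a : H.Carrier) : antipode k (H.antipodeInvHom a) = a := by
  suffices h : H.antipodeHom ∘ₗ H.antipodeInvHom = LinearMap.id from LinearMap.congr_fun h a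
  refine H.basis.ext fun t => H.basis.ext_elem fun r => ?_
  simpa [antipodeHom_basis, antipodeInvHom_basis, Finsupp.single_apply] using H.Sinv_S t r

variable {D : Type*} [Semiring D] [Algebra k D]

theorem convMul_basis {B : Type*} [Semiring B] [Algebra k B]
    (f g : WithConv (H.Carrier →ₗ[k] B)) (r : ι) :
    (f * g) (H.basis r) = ∑ s, ∑ t, H.comul r s t • (f (H.basis s) * g (H.basis t)) := by
  simp [comul_basis]

theorem rtri_eq_repr (a d t : ι) : H.rtri a d t = H.basis.repr (∑ m, ∑ n, H.comul a m n •
    (H.antipodeInvHom (H.basis n) * H.basis t * H.basis m)) d := by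
  simp only [rtri, antipodeInvHom_basis, Finset.sum_mul, Algebra.smul_mul_assoc,
    basis_mul_basis, map_sum, map_smul, Basis.repr_self, Finsupp.smul_single, smul_eq_mul,
    _root_.mul_one, Finsupp.coe_finsetSum, Finsupp.coe_smul, Finset.sum_apply, Pi.smul_apply,
    Finsupp.single_apply, Finset.sum_ite_eq', Finset.mem_univ, ↓reduceIte, Finset.mul_sum]
  refine Finset.sum_congr rfl fun m _ => Finset.sum_congr rfl fun n _ => Finset.sum_comm.trans ?_
  exact Finset.sum_congr rfl fun w _ => Finset.sum_congr rfl fun u _ => by ring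

theorem ltri_eq_repr (b c p : ι) : H.ltri b c p = H.basis.repr (∑ h, ∑ r, ∑ q,
    (H.comul b h r * H.comul r p q) • (H.antipodeInvHom (H.basis q) * H.basis h)) c := by
  simp only [ltri, antipodeInvHom_basis, Finset.sum_mul, Algebra.smul_mul_assoc,
    basis_mul_basis, map_sum, map_smul, Basis.repr_self, Finsupp.smul_single, smul_eq_mul,
    _root_.mul_one, Finsupp.coe_finsetSum, Finsupp.coe_smul, Finset.sum_apply, Pi.smul_apply,
    Finsupp.single_apply, Finset.sum_ite_eq', Finset.mem_univ, ↓reduceIte, Finset.mul_sum]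
  rw [Finset.sum_comm]
  refine Finset.sum_congr rfl fun h _ => ?_
  rw [← Finset.sum_comm_cycle]
  exact Finset.sum_congr rfl fun r _ => Finset.sum_congr rfl fun q _ =>
    Finset.sum_congr rfl fun g _ => by ring

theorem map_eq_sum_smul_e {M : Type*} [AddCommMonoid M] [Module k M] (f : (ι → k) →ₗ[k] M)
    (v : ι → k) :
    f v = ∑ i, v i • f (e i) :=
  f.pi_apply_eq_sum_univ v

theorem sum_op_basis_tmul (y : ι → H.Carrier) (x : ι → D) :
    ∑ d, op (H.basis d) ⊗ₜ[k] (∑ t, H.basis.repr (y t) d • x t) = ∑ t, op (y t) ⊗ₜ x t := by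
  calc _ = ∑ t, op (∑ d, H.basis.repr (y t) d • H.basis d) ⊗ₜ[k] x t := by
        simp only [tmul_sum, Finset.op_sum, MulOpposite.op_smul, sum_tmul, tmul_smul, ← smul_tmul']
        exact Finset.sum_comm
    _ = _ := by simp only [Basis.sum_repr]

variable (J : H.Carrier →ₐ[k] D) {jX : (ι → k) →ₗ[k] D}

theorem convOp_conj_convConst_basis (a : ι) :
    (convOp k H.Carrier D * convConst (opTensor k H.basis fun t => jX (e t)) *
      convOpInv H.antipodeInvHom : WithConv (H.Carrier →ₗ[k] H.Carrierᵐᵒᵖ ⊗[k] D)) (H.basis a) =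
      ∑ d, op (H.basis d) ⊗ₜ[k] jX (H.rtri a d) := by
  simp only [fun d => map_eq_sum_smul_e jX (H.rtri a d), rtri_eq_repr, sum_op_basis_tmul]
  simp only [convMul_basis, mul_convConst_apply, convOp_apply, convOpInv_apply, opTensor,
    Finset.mul_sum, Finset.sum_mul, Algebra.TensorProduct.tmul_mul_tmul, ← op_mul, Finset.op_sum,
    sum_tmul, MulOpposite.op_smul, ← smul_tmul', Finset.smul_sum,
    _root_.one_mul, _root_.mul_one, mul_assoc]
  exact Finset.sum_comm_cycle

theorem convOp_conj_rightHom_basis (b : ι) :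
    (convOp k H.Carrier D * (toConv (rightHom J).toLinearMap * convOpInv H.antipodeInvHom) :
      WithConv (H.Carrier →ₗ[k] H.Carrierᵐᵒᵖ ⊗[k] D)) (H.basis b) =
      ∑ c, op (H.basis c) ⊗ₜ[k] J (H.ltri b c : ι → k) := by
  have hJ (c : ι) : J (H.ltri b c : ι → k) = ∑ i, H.ltri b c i • J (H.basis i) := by
    simp only [basis_apply]
    exact map_eq_sum_smul_e J.toLinearMap (H.ltri b c)
  simp only [hJ, ltri_eq_repr, sum_op_basis_tmul]
  simp only [convMul_basis, convOp_apply, convOpInv_apply, AlgHom.toLinearMap_apply,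
    rightHom_apply, Finset.mul_sum, Algebra.TensorProduct.tmul_mul_tmul, ← op_mul,
    Finset.op_sum, sum_tmul, MulOpposite.op_smul, ← smul_tmul', Finset.smul_sum,
    _root_.one_mul, _root_.mul_one, mul_smul_comm, smul_smul]
  exact Finset.sum_comm_cycle

theorem toConv_rightHom_mul_convConst
    (hcross : ∀ q r, J (H.basis q) * jX (e r) =
      ∑ a, ∑ b, ∑ c, ∑ d, (H.comul q a b * H.mul c d r) •
        (jX (H.rtri a d) * J (H.ltri b c : ι → k))) :
    toConv (rightHom J).toLinearMap * convConst (opTensor k H.basis fun t => jX (e t)) =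
      convOp k H.Carrier D * convConst (opTensor k H.basis fun t => jX (e t)) *
        convOpInv H.antipodeInvHom *
      (convOp k H.Carrier D *
        (toConv (rightHom J).toLinearMap * convOpInv H.antipodeInvHom)) := by
  refine WithConv.ofConv_injective (H.basis.ext fun q => ?_)
  refine (mul_convConst_apply _ _ _).trans (Eq.trans ?_ (H.convMul_basis _ _ q).symm)
  simp only [convOp_conj_convConst_basis, convOp_conj_rightHom_basis]
  simp only [opTensor, AlgHom.toLinearMap_apply, rightHom_apply, Finset.mul_sum, Finset.sum_mul,
    Algebra.TensorProduct.tmul_mul_tmul, _root_.one_mul, hcross, ← op_mul, basis_mul_basis,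
    Finset.op_sum, sum_tmul, tmul_sum, tmul_smul, MulOpposite.op_smul, ← smul_tmul',
    Finset.smul_sum, smul_smul]
  rw [← Finset.sum_comm_cycle]
  exact Finset.sum_congr rfl fun a _ => Finset.sum_congr rfl fun b _ => Finset.sum_comm_cycle.symm

theorem isRMatrix (hX : ∀ x y, jX (H.mulX x y) = jX x * jX y) (hX1 : jX H.oneX = 1)
    (hcross : ∀ q r, J (H.basis q) * jX (e r) =
      ∑ a, ∑ b, ∑ c, ∑ d, (H.comul q a b * H.mul c d r) •
        (jX (H.rtri a d) * J (H.ltri b c : ι → k))) :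
    IsRMatrix J H.basis fun t => jX (e t) where
  comul := by
    have hmulX (s t : ι) : jX (e s) * jX (e t) = ∑ r, H.comul r s t • jX (e r) := by
      rw [← hX, map_eq_sum_smul_e jX]
      simp [mulX, e]
    simp only [hmulX, comul_basis, sum_tmul, tmul_sum, tmul_smul, ← smul_tmul']
    exact Finset.sum_comm_cycle.symm
  counit := by
    rw [map_eq_sum_smul_e jX] at hX1
    simpa only [counit_basis, oneX] using hX1
  intertwine :=
    mul_mul_eq_of_eq_conj_mul_conj
      (convOpInv_mul_convOp H.antipodeInv_antipode H.antipode_antipodeInv)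
      (H.toConv_rightHom_mul_convConst J hcross)

end FinHopfSC

open FinHopfSC in
theorem stmt4_general (k : Type*) [Field k] (ι : Type*) [Fintype ι] [DecidableEq ι]
    (H : FinHopfSC k ι)
    (D : Type*) [Semiring D] [Algebra k D] (jX jA : (ι → k) →ₗ[k] D)
    (hA : ∀ a b, jA (H.mulA a b) = jA a * jA b) (hA1 : jA H.oneA = 1)
    (hX : ∀ x y, jX (H.mulX x y) = jX x * jX y) (hX1 : jX H.oneX = 1)
    (hcross : ∀ q r, jA (e q) * jX (e r) =
      ∑ a, ∑ b, ∑ c, ∑ d, (H.comul q a b * H.mul c d r) •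
        (jX (H.rtri a d) * jA (H.ltri b c))) :
    (∑ t, jA (H.SA (H.SA (e t))) * jX (e t)) * (∑ t, jA (H.SAinv (e t)) * jX (e t)) = 1 ∧
    (∑ t, jA (H.SAinv (e t)) * jX (e t)) * (∑ t, jA (H.SA (H.SA (e t))) * jX (e t)) = 1 := by
  let J : H.Carrier →ₐ[k] D := AlgHom.ofLinearMap jA hA1 hA
  have hR : IsRMatrix J H.basis fun t => jX (e t) :=
    H.isRMatrix J hX hX1 fun q r => by
      rw [basis_apply]
      exact hcross q r
  have hTS : Function.LeftInverse H.antipodeInvHom (antipode k) := H.antipodeInv_antipode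
  have hST : Function.RightInverse H.antipodeInvHom (antipode k) := H.antipode_antipodeInv
  have hright := hR.sum_antipode_sq_mul_sum_antipodeInv hST
  have hleft := hR.sum_antipodeInv_mul_sum_antipode_sq hTS hST
  simp only [basis_apply] at hright hleft
  exact ⟨hright, hleft⟩

open FinHopfSC in
/-- in the Drinfeld double `D(A)` of a finite-dimensional Hopf
algebra `A`, the element `d₀ = ∑ t, S²(a_t) x_t` is invertible with inverse
`∑ t, S⁻¹(a_t) x_t`.  Here the Drinfeld double is presented as an algebra `D`
together with algebra embeddings `jX` of `A*` and `jA` of `A` such that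
`x ⊗ a ↦ jX x * jA a` is a linear isomorphism onto `D` and the double
cross-product relation
`a x = ∑ (a₍₁₎ ▷ x₍₂₎)(a₍₂₎ ◁ x₍₁₎)` holds. -/
theorem stmt4 (k : Type*) [Field k] (ι : Type*) [Fintype ι] [DecidableEq ι]
    (H : FinHopfSC k ι)
    (D : Type*) [Ring D] [Algebra k D] (jX jA : (ι → k) →ₗ[k] D)
    (hA : ∀ a b, jA (H.mulA a b) = jA a * jA b) (hA1 : jA H.oneA = 1)
    (hX : ∀ x y, jX (H.mulX x y) = jX x * jX y) (hX1 : jX H.oneX = 1)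
    (hbij : Function.Bijective
      (fun c : ι → ι → k => ∑ p, ∑ q, c p q • (jX (e p) * jA (e q))))
    (hcross : ∀ q r, jA (e q) * jX (e r) =
      ∑ a, ∑ b, ∑ c, ∑ d, (H.comul q a b * H.mul c d r) •
        (jX (H.rtri a d) * jA (H.ltri b c))) :
    (∑ t, jA (H.SA (H.SA (e t))) * jX (e t)) * (∑ t, jA (H.SAinv (e t)) * jX (e t)) = 1 ∧
    (∑ t, jA (H.SAinv (e t)) * jX (e t)) * (∑ t, jA (H.SA (H.SA (e t))) * jX (e t)) = 1 :=
  stmt4_general k ι H D jX jA hA hA1 hX hX1 hcross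
end

section
/- Let A be a finite-dimensional Hopf algebra over a field k, and let d₀ = Σ_t S²(a_t)x_t in the Drinfeld double D(A), where {a_t} is a basis of A with dual basis {x_t}. Then for every element u ∈ D(A), S²_{D(A)}(u) = d₀ u d₀⁻¹, where S_{D(A)} is the antipode of D(A), given on x ⊗ a by S_{D(A)}(x ⊗ a) = S(a)S⁻¹(x). -/
/-!
Write `α` and `ξ` for the inclusions of `A` and `A*` into the double. The cross relation is
equivalent to the exchange relation `⟨x₁, a₂⟩ a₁ x₂ = ⟨x₂, a₁⟩ x₁ a₂`, in which both sides are an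
invertible operator applied to the products `a x` and `x a`. Two consequences give the theorem.

* `S ⊗ S⁻¹` interchanges the two operators, so a linear map with `x a ↦ S(a) S⁻¹(x)` also satisfies
  `a x ↦ S⁻¹(x) S(a)`. Hence `S_D²` sends `x a` to `S⁻²(x) S²(a)`.
* Multiplying the exchange relation on the left by `S⁻¹` of a basis vector and summing gives
  `v S²(a) = a v` for `v = ∑ S⁻¹(a_t) x_t`. The relation is symmetric under replacing `A` by
  `A*` with opposite product and coproduct, whence `v S⁻²(x) = x v`. These two identities also show
  that `v` is inverse to `d₀`, and so `d₀ (x a) v = S⁻²(x) S²(a)`.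
-/

namespace FinHopfSC

open Matrix MulOpposite
open scoped Kronecker Matrix.Module

section Kronecker

theorem sum_kronecker {α τ l m n p : Type*} [NonUnitalNonAssocSemiring α] (s : Finset τ)
    (M : τ → Matrix l m α) (N : Matrix n p α) :
    (∑ i ∈ s, M i) ⊗ₖ N = ∑ i ∈ s, M i ⊗ₖ N := by
  ext
  simp only [kroneckerMap_apply, Matrix.sum_apply, Finset.sum_mul]

theorem kronecker_sum {α τ l m n p : Type*} [NonUnitalNonAssocSemiring α] (s : Finset τ)
    (M : Matrix l m α) (N : τ → Matrix n p α) :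
    M ⊗ₖ (∑ i ∈ s, N i) = ∑ i ∈ s, M ⊗ₖ N i := by
  ext
  simp only [kroneckerMap_apply, Matrix.sum_apply, Finset.mul_sum]

theorem kronecker_smul_bilin {k m n U V W : Type*} [CommRing k] [Fintype m] [DecidableEq m]
    [Fintype n] [DecidableEq n] [AddCommGroup U] [Module k U] [AddCommGroup V] [Module k V]
    [AddCommGroup W] [Module k W] (β : V →ₗ[k] W →ₗ[k] U) (M : Matrix m m k) (N : Matrix n n k)
    (f : m → V) (g : n → W) :
    (M ⊗ₖ N) • (fun i : m × n => β (f i.1) (g i.2)) = fun i => β ((M • f) i.1) ((N • g) i.2) := by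
  funext i
  simp only [Matrix.Module.smul_apply, kroneckerMap_apply, map_sum, map_smul,
    LinearMap.sum_apply, LinearMap.smul_apply, Finset.smul_sum, smul_smul,
    Fintype.sum_prod_type]
  rw [Finset.sum_comm]
  exact Finset.sum_congr rfl fun _ _ => Finset.sum_congr rfl fun _ _ => by rw [mul_comm]

theorem kronecker_smul_mul {k m n R : Type*} [CommRing k] [Fintype m] [DecidableEq m]
    [Fintype n] [DecidableEq n] [Ring R] [Algebra k R] (M : Matrix m m k) (N : Matrix n n k)
    (f : m → R) (g : n → R) :
    (M ⊗ₖ N) • (fun i : m × n => f i.1 * g i.2) = fun i => (M • f) i.1 * (N • g) i.2 :=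
  kronecker_smul_bilin (LinearMap.mul k R) M N f g

theorem kronecker_smul_mul_swap {k m n R : Type*} [CommRing k] [Fintype m] [DecidableEq m]
    [Fintype n] [DecidableEq n] [Ring R] [Algebra k R] (M : Matrix m m k) (N : Matrix n n k)
    (f : m → R) (g : n → R) :
    (M ⊗ₖ N) • (fun i : m × n => g i.2 * f i.1) = fun i => (N • g) i.2 * (M • f) i.1 :=
  kronecker_smul_bilin (LinearMap.mul k R).flip M N f g

end Kronecker

/-- The image `∑ α(a_t) ξ(x_t)` of the canonical element `∑ a_t ⊗ x_t` of `A ⊗ A*` under linear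
maps `α : A → R` and `ξ : A* → R` given on the bases. -/
def canonicalElt {ι R : Type*} [Fintype ι] [Ring R] (α ξ : ι → R) : R := ∑ t, α t * ξ t

theorem canonicalElt_op {ι R : Type*} [Fintype ι] [Ring R] (α ξ : ι → R) :
    canonicalElt (fun t => op (ξ t)) (fun t => op (α t)) = op (canonicalElt α ξ) := by
  simp only [canonicalElt, Finset.op_sum, op_mul]

variable {k : Type*} [Field k] {ι : Type*} [Fintype ι] [DecidableEq ι] (H : FinHopfSC k ι)
variable {R : Type*} [Ring R] [Algebra k R]

/-- The convolution product of two linear maps `A → R`, each given by its values on the basis. -/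
def conv (F G : ι → R) : ι → R := fun q => ∑ s, ∑ t, H.comul q s t • (F s * G t)

theorem conv_assoc (F G K : ι → R) : H.conv (H.conv F G) K = H.conv F (H.conv G K) := by
  funext q
  calc H.conv (H.conv F G) K q
      = ∑ a, ∑ b, ∑ c, (∑ s, H.comul q s c * H.comul s a b) • (F a * G b * K c) := by
        simp only [conv, Finset.sum_mul, Finset.smul_sum, Finset.sum_smul, smul_mul_assoc,
          smul_smul, ← Fintype.sum_prod_type']
        exact Fintype.sum_equiv ⟨fun ⟨s, c, a, b⟩ => ⟨a, b, c, s⟩,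
          fun ⟨a, b, c, s⟩ => ⟨s, c, a, b⟩, fun _ => rfl, fun _ => rfl⟩ _ _ fun _ => rfl
    _ = H.conv F (H.conv G K) q := by
        simp only [H.coassoc, conv, Finset.mul_sum, Finset.smul_sum, Finset.sum_smul,
          mul_smul_comm, smul_smul, mul_assoc, ← Fintype.sum_prod_type']
        exact Fintype.sum_equiv ⟨fun ⟨a, b, c, s⟩ => ⟨a, s, b, c⟩,
          fun ⟨a, s, b, c⟩ => ⟨a, b, c, s⟩, fun _ => rfl, fun _ => rfl⟩ _ _ fun _ => rfl

theorem counit_conv (x : R) (F : ι → R) :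
    H.conv (fun q => H.counit q • x) F = fun q => x * F q := by
  funext q
  calc H.conv (fun q => H.counit q • x) F q
      = ∑ t, (∑ s, H.comul q s t * H.counit s) • (x * F t) := by
        simp only [conv, smul_mul_assoc, smul_smul, Finset.sum_smul]
        exact Finset.sum_comm
    _ = x * F q := by simp [H.counit_comul]

theorem conv_counit (F : ι → R) (x : R) :
    H.conv F (fun q => H.counit q • x) = fun q => F q * x := by
  funext q
  calc H.conv F (fun q => H.counit q • x) q
      = ∑ s, (∑ t, H.comul q s t * H.counit t) • (F s * x) := by
        simp only [conv, mul_smul_comm, smul_smul, Finset.sum_smul]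
    _ = F q * x := by simp [H.comul_counit]

variable {V : Type*} [AddCommGroup V] [Module k V]

/-- The composite `F ∘ S` of a linear map `F : A → V` with the antipode. -/
def compAntipode (F : ι → V) : ι → V := Matrix.of H.S • F

/-- The composite `F ∘ S⁻¹` of a linear map `F : A → V` with the inverse of the antipode. -/
def compAntipodeInv (F : ι → V) : ι → V := Matrix.of H.Sinv • F

theorem compAntipode_apply (F : ι → V) (q : ι) : H.compAntipode F q = ∑ t, H.S q t • F t := by
  simp [compAntipode, Matrix.Module.smul_apply]

theorem compAntipodeInv_apply (F : ι → V) (q : ι) :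
    H.compAntipodeInv F q = ∑ t, H.Sinv q t • F t := by
  simp [compAntipodeInv, Matrix.Module.smul_apply]

theorem S_mul_Sinv : Matrix.of H.S * Matrix.of H.Sinv = 1 := by
  ext a r; simp [Matrix.mul_apply, H.S_Sinv, Matrix.one_apply]

theorem Sinv_mul_S : Matrix.of H.Sinv * Matrix.of H.S = 1 := by
  ext a r; simp [Matrix.mul_apply, H.Sinv_S, Matrix.one_apply]

theorem compAntipode_compAntipodeInv (F : ι → V) :
    H.compAntipode (H.compAntipodeInv F) = F := by
  rw [compAntipode, compAntipodeInv, smul_smul, S_mul_Sinv, one_smul]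

theorem compAntipodeInv_compAntipode (F : ι → V) :
    H.compAntipodeInv (H.compAntipode F) = F := by
  rw [compAntipode, compAntipodeInv, smul_smul, Sinv_mul_S, one_smul]

/-- `α` is an algebra map `A → R`, given by its values on the basis. -/
structure IsRep (α : ι → R) : Prop where
  map_mul : ∀ a b, ∑ r, H.mul a b r • α r = α a * α b
  map_one : ∑ r, H.one r • α r = 1

variable {H}

theorem IsRep.antipode_conv {α : ι → R} (h : H.IsRep α) :
    H.conv (H.compAntipode α) α = fun q => H.counit q • 1 := by
  funext q
  calc H.conv (H.compAntipode α) α q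
      = ∑ r, (∑ a, ∑ b, ∑ s, H.comul q a b * H.S a s * H.mul s b r) • α r := by
        simp only [conv, compAntipode_apply, Finset.sum_mul, smul_mul_assoc, ← h.map_mul,
          Finset.smul_sum, smul_smul, Finset.sum_smul, ← Fintype.sum_prod_type']
        exact Fintype.sum_equiv ⟨fun ⟨a, b, s, r⟩ => ⟨r, a, b, s⟩,
          fun ⟨r, a, b, s⟩ => ⟨a, b, s, r⟩, fun _ => rfl, fun _ => rfl⟩ _ _
          fun _ => by simp only [mul_assoc, Equiv.coe_fn_mk]
    _ = H.counit q • 1 := by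
        simp only [H.antipode_left, mul_smul, ← Finset.smul_sum, h.map_one]

theorem IsRep.conv_antipode {α : ι → R} (h : H.IsRep α) :
    H.conv α (H.compAntipode α) = fun q => H.counit q • 1 := by
  funext q
  calc H.conv α (H.compAntipode α) q
      = ∑ r, (∑ a, ∑ b, ∑ s, H.comul q a b * H.S b s * H.mul a s r) • α r := by
        simp only [conv, compAntipode_apply, Finset.mul_sum, mul_smul_comm, ← h.map_mul,
          Finset.smul_sum, smul_smul, Finset.sum_smul, ← Fintype.sum_prod_type']
        exact Fintype.sum_equiv ⟨fun ⟨a, b, s, r⟩ => ⟨r, a, b, s⟩,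
          fun ⟨r, a, b, s⟩ => ⟨a, b, s, r⟩, fun _ => rfl, fun _ => rfl⟩ _ _
          fun _ => by simp only [mul_assoc, Equiv.coe_fn_mk]
    _ = H.counit q • 1 := by
        simp only [H.antipode_right, mul_smul, ← Finset.smul_sum, h.map_one]

theorem IsRep.eq_conv_antipode {α F G : ι → R} (h : H.IsRep α) (hF : H.conv F α = G) :
    F = H.conv G (H.compAntipode α) := by
  simp [← hF, conv_assoc, h.conv_antipode, conv_counit]

theorem IsRep.conv_conv_mul {α : ι → R} (h : H.IsRep α) (F : ι → R) (a b : ι) :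
    H.conv (fun b' => H.conv (fun a' => ∑ r, H.mul a' b' r • F r) α a) α b =
      ∑ r, H.mul a b r • H.conv F α r := by
  calc _ = ∑ s, ∑ t, (∑ a1, ∑ a2, ∑ b1, ∑ b2, H.comul a a1 a2 * H.comul b b1 b2 *
          H.mul a1 b1 s * H.mul a2 b2 t) • (F s * α t) := by
        simp only [conv, Finset.sum_mul, smul_mul_assoc, mul_assoc, ← h.map_mul, Finset.mul_sum,
          mul_smul_comm, Finset.smul_sum, smul_smul, Finset.sum_smul, ← Fintype.sum_prod_type']
        exact Fintype.sum_equiv ⟨fun ⟨b1, b2, ⟨a1, a2, s⟩, t⟩ => ⟨s, t, a1, a2, b1, b2⟩,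
          fun ⟨s, t, a1, a2, b1, b2⟩ => ⟨b1, b2, ⟨a1, a2, s⟩, t⟩, fun _ => rfl, fun _ => rfl⟩ _ _
          fun _ => by simp only [Equiv.coe_fn_mk]; congr 1; ring
    _ = ∑ r, H.mul a b r • H.conv F α r := by
        simp only [← H.comul_mul]
        simp only [conv, Finset.sum_smul, Finset.smul_sum, smul_smul,
          ← Fintype.sum_prod_type']
        exact Fintype.sum_equiv ⟨fun ⟨s, t, r⟩ => ⟨r, s, t⟩, fun ⟨r, s, t⟩ => ⟨s, t, r⟩,
          fun _ => rfl, fun _ => rfl⟩ _ _ fun _ => rfl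

theorem IsRep.sum_mul_compAntipode {α : ι → R} (h : H.IsRep α) (a b : ι) :
    ∑ r, H.mul a b r • H.compAntipode α r = H.compAntipode α b * H.compAntipode α a := by
  set σ := H.compAntipode α
  have hb (a : ι) : (fun b' => H.conv (fun a' => ∑ r, H.mul a' b' r • σ r) α a) =
      fun b' => H.counit a • σ b' := by
    refine (h.eq_conv_antipode (G := fun b' => H.counit b' • H.counit a • 1) ?_).trans ?_
    · funext b
      rw [h.conv_conv_mul, h.antipode_conv]
      simp only [smul_smul, ← Finset.sum_smul, H.counit_mul, mul_comm]
    · simp only [counit_conv, smul_mul_assoc, _root_.one_mul, σ]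
  have ha : (fun a' => ∑ r, H.mul a' b r • σ r) = fun a' => σ b * σ a' := by
    refine (h.eq_conv_antipode (G := fun a' => H.counit a' • σ b) ?_).trans (counit_conv ..)
    funext a
    exact congrFun (hb a) b
  exact congrFun ha a

theorem IsRep.sum_one_compAntipode {α : ι → R} (h : H.IsRep α) :
    ∑ r, H.one r • H.compAntipode α r = 1 := by
  calc ∑ r, H.one r • H.compAntipode α r
      = ∑ s, ∑ t, (H.one s * H.one t) • (H.compAntipode α s * α t) := by
        simp only [← smul_mul_smul_comm, ← Finset.sum_mul_sum, h.map_one, _root_.mul_one]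
    _ = ∑ r, H.one r • H.conv (H.compAntipode α) α r := by
        simp only [← H.comul_one, conv, Finset.sum_smul, Finset.smul_sum, smul_smul,
          ← Fintype.sum_prod_type']
        exact Fintype.sum_equiv ⟨fun ⟨s, t, r⟩ => ⟨r, s, t⟩, fun ⟨r, s, t⟩ => ⟨s, t, r⟩,
          fun _ => rfl, fun _ => rfl⟩ _ _ fun _ => rfl
    _ = 1 := by
        simp only [h.antipode_conv, smul_smul, ← Finset.sum_smul, H.counit_one, one_smul]

theorem IsRep.op_compAntipode {α : ι → R} (h : H.IsRep α) :
    H.IsRep fun q => op (H.compAntipode α q) where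
  map_mul a b := by
    simp only [← op_smul, ← Finset.op_sum, ← op_mul, h.sum_mul_compAntipode]
  map_one := by
    simp only [← op_smul, ← Finset.op_sum, h.sum_one_compAntipode, op_one]

variable (H)

/-- Left multiplication by the basis vector `a_a` of `A`, as a matrix acting on column vectors. -/
def leftReg (a : ι) : Matrix ι ι k := of fun r u => H.mul a u r

/-- Right multiplication by the basis vector `a_a` of `A`, as a matrix acting on column vectors. -/
def rightReg (a : ι) : Matrix ι ι k := of fun r u => H.mul u a r

@[simp] theorem leftReg_apply (a r u : ι) : H.leftReg a r u = H.mul a u r := rfl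

@[simp] theorem rightReg_apply (a r u : ι) : H.rightReg a r u = H.mul u a r := rfl

theorem isRep_leftReg : H.IsRep H.leftReg where
  map_mul a b := by
    ext r u
    simpa [Matrix.sum_apply, mul_apply, mul_comm] using H.assoc a b u r
  map_one := by
    ext r u
    simpa [Matrix.sum_apply, one_apply, eq_comm] using H.one_mul u r

theorem leftReg_mul_rightReg (a b : ι) :
    H.leftReg a * H.rightReg b = H.rightReg b * H.leftReg a := by
  ext r u
  simpa [mul_apply, mul_comm] using (H.assoc a u b r).symm

theorem leftReg_mulVec_one (a : ι) : H.leftReg a *ᵥ H.one = Pi.single a 1 := by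
  ext r
  simpa [mulVec, dotProduct, mul_comm, Pi.single_apply, eq_comm] using H.mul_one a r

theorem sum_leftReg_injective : Function.Injective fun c : ι → k => ∑ t, c t • H.leftReg t := by
  intro c d h
  have h' := congrArg (· *ᵥ H.one) h
  simpa only [sum_mulVec, smul_mulVec, leftReg_mulVec_one, ← Pi.single_smul, smul_eq_mul,
    _root_.mul_one, Finset.univ_sum_single] using h'

theorem sum_mul_S (a b t : ι) :
    ∑ r, H.mul a b r * H.S r t = ∑ s, ∑ u, H.S b s * H.S a u * H.mul s u t := by
  refine congrFun (H.sum_leftReg_injective (a₁ := fun t => ∑ r, H.mul a b r * H.S r t)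
    (a₂ := fun t => ∑ s, ∑ u, H.S b s * H.S a u * H.mul s u t) ?_) t
  have h := H.isRep_leftReg.sum_mul_compAntipode a b
  simp only [compAntipode_apply, Finset.sum_mul_sum, smul_mul_smul_comm,
    ← H.isRep_leftReg.map_mul, Finset.smul_sum, smul_smul] at h
  simp only [Finset.sum_smul]
  rw [Finset.sum_comm, h]
  simp only [← Fintype.sum_prod_type']
  exact Fintype.sum_equiv ⟨fun ⟨s, u, t⟩ => ⟨t, s, u⟩, fun ⟨t, s, u⟩ => ⟨s, u, t⟩,
    fun _ => rfl, fun _ => rfl⟩ _ _ fun _ => rfl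

theorem one_vecMul_S : H.one ᵥ* of H.S = H.one := by
  apply H.sum_leftReg_injective
  have h := H.isRep_leftReg.sum_one_compAntipode
  simp only [compAntipode_apply, Finset.smul_sum, smul_smul] at h
  rw [Finset.sum_comm] at h
  simpa only [vecMul, dotProduct, of_apply, Finset.sum_smul, H.isRep_leftReg.map_one] using h

theorem transpose_S_mul_leftReg (a : ι) :
    (of H.S)ᵀ * H.leftReg a = H.compAntipode H.rightReg a * (of H.S)ᵀ := by
  ext t b
  simp only [mul_apply, transpose_apply, of_apply, leftReg_apply, compAntipode_apply,
    Matrix.sum_apply, Matrix.smul_apply, rightReg_apply, smul_eq_mul, Finset.sum_mul]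
  simp only [mul_comm (H.S _ t), sum_mul_S]
  exact Finset.sum_congr rfl fun _ _ => Finset.sum_congr rfl fun _ _ => by ring

theorem transpose_S_mul_rightReg (b : ι) :
    (of H.S)ᵀ * H.rightReg b = H.compAntipode H.leftReg b * (of H.S)ᵀ := by
  ext t a
  simp only [mul_apply, transpose_apply, of_apply, leftReg_apply, compAntipode_apply,
    Matrix.sum_apply, Matrix.smul_apply, rightReg_apply, smul_eq_mul, Finset.sum_mul]
  simp only [mul_comm (H.S _ t), sum_mul_S]
  rw [Finset.sum_comm]
  exact Finset.sum_congr rfl fun _ _ => Finset.sum_congr rfl fun _ _ => by ring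

theorem vecMul_S_injective : Function.Injective (· ᵥ* of H.S) :=
  Function.LeftInverse.injective (g := (· ᵥ* of H.Sinv)) fun x => by
    simp only [vecMul_vecMul, S_mul_Sinv, vecMul_one]

theorem antipodeInv_left (r t : ι) :
    ∑ a, ∑ b, ∑ s, H.comul r b a * H.Sinv a s * H.mul s b t = H.counit r * H.one t := by
  suffices h : (fun t => ∑ a, ∑ b, ∑ s, H.comul r b a * H.Sinv a s * H.mul s b t) ᵥ* of H.S =
      (H.counit r • H.one) ᵥ* of H.S from congrFun (H.vecMul_S_injective h) t
  rw [smul_vecMul, one_vecMul_S]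
  funext t
  calc _ = ∑ a, ∑ b, ∑ s, H.comul r b a * H.Sinv a s * ∑ u, H.mul s b u * H.S u t := by
        simp only [vecMul, dotProduct, of_apply, Finset.mul_sum, Finset.sum_mul, mul_assoc,
          ← Fintype.sum_prod_type']
        exact Fintype.sum_equiv ⟨fun ⟨u, a, b, s⟩ => ⟨a, b, s, u⟩,
          fun ⟨a, b, s, u⟩ => ⟨u, a, b, s⟩, fun _ => rfl, fun _ => rfl⟩ _ _ fun _ => rfl
    _ = ∑ a, ∑ b, ∑ x, ∑ y, (∑ s, H.Sinv a s * H.S s y) *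
          (H.comul r b a * H.S b x * H.mul x y t) := by
        simp only [sum_mul_S, Finset.mul_sum, Finset.sum_mul, ← Fintype.sum_prod_type']
        exact Fintype.sum_equiv ⟨fun ⟨a, b, s, x, y⟩ => ⟨a, b, x, y, s⟩,
          fun ⟨a, b, x, y, s⟩ => ⟨a, b, s, x, y⟩, fun _ => rfl, fun _ => rfl⟩ _ _
          fun _ => by simp only [Equiv.coe_fn_mk]; ring
    _ = ∑ b, ∑ a, ∑ x, H.comul r b a * H.S b x * H.mul x a t := by
        rw [Finset.sum_comm]
        simp [H.Sinv_S]
    _ = H.counit r * H.one t := H.antipode_left r t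

theorem antipodeInv_right (r t : ι) :
    ∑ a, ∑ b, ∑ s, H.comul r b a * H.Sinv b s * H.mul a s t = H.counit r * H.one t := by
  suffices h : (fun t => ∑ a, ∑ b, ∑ s, H.comul r b a * H.Sinv b s * H.mul a s t) ᵥ* of H.S =
      (H.counit r • H.one) ᵥ* of H.S from congrFun (H.vecMul_S_injective h) t
  rw [smul_vecMul, one_vecMul_S]
  funext t
  calc _ = ∑ a, ∑ b, ∑ s, H.comul r b a * H.Sinv b s * ∑ u, H.mul a s u * H.S u t := by
        simp only [vecMul, dotProduct, of_apply, Finset.mul_sum, Finset.sum_mul, mul_assoc,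
          ← Fintype.sum_prod_type']
        exact Fintype.sum_equiv ⟨fun ⟨u, a, b, s⟩ => ⟨a, b, s, u⟩,
          fun ⟨a, b, s, u⟩ => ⟨u, a, b, s⟩, fun _ => rfl, fun _ => rfl⟩ _ _ fun _ => rfl
    _ = ∑ a, ∑ b, ∑ x, ∑ y, (∑ s, H.Sinv b s * H.S s x) *
          (H.comul r b a * H.S a y * H.mul x y t) := by
        simp only [sum_mul_S, Finset.mul_sum, Finset.sum_mul, ← Fintype.sum_prod_type']
        exact Fintype.sum_equiv ⟨fun ⟨a, b, s, x, y⟩ => ⟨a, b, x, y, s⟩,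
          fun ⟨a, b, x, y, s⟩ => ⟨a, b, s, x, y⟩, fun _ => rfl, fun _ => rfl⟩ _ _
          fun _ => by simp only [Equiv.coe_fn_mk]; ring
    _ = ∑ b, ∑ a, ∑ y, H.comul r b a * H.S a y * H.mul b y t := by
        rw [Finset.sum_comm]
        simp only [H.Sinv_S, ite_mul, zero_mul, _root_.one_mul]
        refine Finset.sum_congr rfl fun b _ => Finset.sum_congr rfl fun a _ => ?_
        rw [Finset.sum_comm]
        simp
    _ = H.counit r * H.one t := H.antipode_right r t

/-- The Hopf algebra `A` with the opposite coproduct; its antipode is `S⁻¹`. -/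
def cop : FinHopfSC k ι where
  mul := H.mul
  one := H.one
  comul r s t := H.comul r t s
  counit := H.counit
  S := H.Sinv
  Sinv := H.S
  assoc := H.assoc
  one_mul := H.one_mul
  mul_one := H.mul_one
  coassoc r a b c := (H.coassoc r c b a).symm
  counit_comul := H.comul_counit
  comul_counit := H.counit_comul
  comul_mul a b s t := by
    rw [H.comul_mul]
    simp only [← Fintype.sum_prod_type']
    exact Fintype.sum_equiv ⟨fun ⟨a1, a2, b1, b2⟩ => ⟨a2, a1, b2, b1⟩,
      fun ⟨a2, a1, b2, b1⟩ => ⟨a1, a2, b1, b2⟩, fun _ => rfl, fun _ => rfl⟩ _ _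
      fun _ => by simp only [Equiv.coe_fn_mk]; ring
  counit_mul := H.counit_mul
  comul_one s t := by rw [H.comul_one, mul_comm]
  counit_one := H.counit_one
  antipode_left := H.antipodeInv_left
  antipode_right := H.antipodeInv_right
  S_Sinv := H.Sinv_S
  Sinv_S := H.S_Sinv

/-- The dual Hopf algebra `A*` with the opposite product and the opposite coproduct, on the dual
basis. Reversing both makes it an involution that only permutes and transposes the structure
constants. -/
def opcopDual : FinHopfSC k ι where
  mul s t r := H.comul r t s
  one := H.counit
  comul r s t := H.mul t s r
  counit := H.one
  S t r := H.S r t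
  Sinv t r := H.Sinv r t
  assoc a b c r := by simpa only [mul_comm] using (H.coassoc r c b a).symm
  one_mul b r := by simpa only [mul_comm, eq_comm] using H.comul_counit r b
  mul_one b r := by simpa only [mul_comm, eq_comm] using H.counit_comul r b
  coassoc r a b c := by simpa only [mul_comm] using (H.assoc c b a r).symm
  counit_comul r t := by simpa only [mul_comm, eq_comm] using H.mul_one t r
  comul_counit r t := by simpa only [mul_comm, eq_comm] using H.one_mul t r
  comul_mul a b s t := by
    simp only [mul_comm (H.comul _ b a), H.comul_mul, ← Fintype.sum_prod_type']
    exact Fintype.sum_equiv ⟨fun ⟨t1, t2, s1, s2⟩ => ⟨s2, t2, s1, t1⟩,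
      fun ⟨s2, t2, s1, t1⟩ => ⟨t1, t2, s1, s2⟩, fun _ => rfl, fun _ => rfl⟩ _ _
      fun _ => by simp only [Equiv.coe_fn_mk]; ring
  counit_mul a b := by simpa only [mul_comm] using H.comul_one b a
  comul_one s t := by simpa only [mul_comm] using H.counit_mul t s
  counit_one := by simpa only [mul_comm] using H.counit_one
  antipode_left r t := by
    rw [mul_comm, ← H.antipode_right]
    simp only [← Fintype.sum_prod_type']
    exact Fintype.sum_equiv ⟨fun ⟨a, b, s⟩ => ⟨b, s, a⟩, fun ⟨b, s, a⟩ => ⟨a, b, s⟩,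
      fun _ => rfl, fun _ => rfl⟩ _ _ fun _ => by simp only [Equiv.coe_fn_mk]; ring
  antipode_right r t := by
    rw [mul_comm, ← H.antipode_left]
    simp only [← Fintype.sum_prod_type']
    exact Fintype.sum_equiv ⟨fun ⟨a, b, s⟩ => ⟨s, a, b⟩, fun ⟨s, a, b⟩ => ⟨a, b, s⟩,
      fun _ => rfl, fun _ => rfl⟩ _ _ fun _ => by simp only [Equiv.coe_fn_mk]; ring
  S_Sinv a r := by simpa only [mul_comm, eq_comm] using H.Sinv_S r a
  Sinv_S a r := by simpa only [mul_comm, eq_comm] using H.S_Sinv r a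

variable {U W : Type*} [AddCommGroup U] [Module k U] [AddCommGroup W] [Module k W]

theorem sum_compAntipode_left (β : V →ₗ[k] W →ₗ[k] U) (f : ι → V) (g : ι → W) :
    ∑ t, β (H.compAntipode f t) (g t) = ∑ t, β (f t) (H.opcopDual.compAntipode g t) := by
  simp only [compAntipode_apply, map_sum, map_smul, LinearMap.sum_apply, LinearMap.smul_apply]
  exact Finset.sum_comm

/-- The operator on functions `F` on `A ⊗ A*` given by `F(a ⊗ x) ↦ ⟨x₁, a₂⟩ F(a₁ ⊗ x₂)`. -/
def pairL : Matrix (ι × ι) (ι × ι) k := ∑ t, H.opcopDual.leftReg t ⊗ₖ H.leftReg t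

/-- The operator on functions `F` on `A ⊗ A*` given by `F(a ⊗ x) ↦ ⟨x₂, a₁⟩ F(a₂ ⊗ x₁)`. -/
def pairR : Matrix (ι × ι) (ι × ι) k := ∑ t, H.opcopDual.rightReg t ⊗ₖ H.rightReg t

/-- `pairL` with an antipode: `F(a ⊗ x) ↦ ⟨x₁, S⁻¹(a₂)⟩ F(a₁ ⊗ x₂)`. -/
def pairLInv : Matrix (ι × ι) (ι × ι) k :=
  ∑ t, H.opcopDual.leftReg t ⊗ₖ H.compAntipodeInv H.leftReg t

theorem sum_leftReg_kronecker_mul (F G : ι → Matrix ι ι k) :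
    (∑ s, H.opcopDual.leftReg s ⊗ₖ F s) * ∑ t, H.opcopDual.leftReg t ⊗ₖ G t =
      ∑ r, H.opcopDual.leftReg r ⊗ₖ H.cop.conv F G r := by
  simp only [Finset.sum_mul_sum, ← mul_kronecker_mul, ← H.opcopDual.isRep_leftReg.map_mul, conv,
    sum_kronecker, kronecker_sum, smul_kronecker, kronecker_smul, ← Fintype.sum_prod_type']
  exact Fintype.sum_equiv ⟨fun ⟨s, t, r⟩ => ⟨r, s, t⟩, fun ⟨r, s, t⟩ => ⟨s, t, r⟩,
    fun _ => rfl, fun _ => rfl⟩ _ _ fun _ => rfl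

theorem sum_leftReg_kronecker_counit :
    ∑ r, H.opcopDual.leftReg r ⊗ₖ (H.counit r • (1 : Matrix ι ι k)) = 1 := by
  simp only [kronecker_smul, ← smul_kronecker, ← sum_kronecker]
  exact (congrArg (· ⊗ₖ 1) H.opcopDual.isRep_leftReg.map_one).trans one_kronecker_one

theorem pairL_mul_pairLInv : H.pairL * H.pairLInv = 1 :=
  (H.sum_leftReg_kronecker_mul _ _).trans <| by
    rw [show H.compAntipodeInv H.leftReg = H.cop.compAntipode H.cop.leftReg from rfl,
      show H.leftReg = H.cop.leftReg from rfl, H.cop.isRep_leftReg.conv_antipode]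
    exact H.sum_leftReg_kronecker_counit

theorem pairLInv_mul_pairL : H.pairLInv * H.pairL = 1 := mul_eq_one_comm.mp H.pairL_mul_pairLInv

theorem sum_compAntipode_kronecker (F G : ι → Matrix ι ι k) :
    ∑ t, H.opcopDual.compAntipode F t ⊗ₖ H.compAntipodeInv G t = ∑ t, F t ⊗ₖ G t := by
  have h := H.opcopDual.sum_compAntipode_left (kroneckerBilinear (R := k) (α := k) :
    Matrix ι ι k →ₗ[k] Matrix ι ι k →ₗ[k] Matrix (ι × ι) (ι × ι) k) F (H.compAntipodeInv G)
  rwa [show H.opcopDual.opcopDual = H from rfl, compAntipode_compAntipodeInv] at h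

theorem kronecker_antipode_mul_pairL :
    (of H.S ⊗ₖ (of H.Sinv)ᵀ) * H.pairL = H.pairR * (of H.S ⊗ₖ (of H.Sinv)ᵀ) := by
  have hS (t : ι) : of H.S * H.opcopDual.leftReg t =
      H.opcopDual.compAntipode H.opcopDual.rightReg t * of H.S :=
    H.opcopDual.transpose_S_mul_leftReg t
  have hT (t : ι) : (of H.Sinv)ᵀ * H.leftReg t =
      H.compAntipodeInv H.rightReg t * (of H.Sinv)ᵀ := H.cop.transpose_S_mul_leftReg t
  simp only [pairL, pairR, Finset.mul_sum, Finset.sum_mul, ← mul_kronecker_mul, hS, hT]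
  simp only [mul_kronecker_mul, ← Finset.sum_mul, sum_compAntipode_kronecker]

theorem kronecker_antipode_mul_pairR :
    (of H.S ⊗ₖ (of H.Sinv)ᵀ) * H.pairR = H.pairL * (of H.S ⊗ₖ (of H.Sinv)ᵀ) := by
  have hS (t : ι) : of H.S * H.opcopDual.rightReg t =
      H.opcopDual.compAntipode H.opcopDual.leftReg t * of H.S :=
    H.opcopDual.transpose_S_mul_rightReg t
  have hT (t : ι) : (of H.Sinv)ᵀ * H.rightReg t =
      H.compAntipodeInv H.leftReg t * (of H.Sinv)ᵀ := H.cop.transpose_S_mul_rightReg t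
  simp only [pairL, pairR, Finset.mul_sum, Finset.sum_mul, ← mul_kronecker_mul, hS, hT]
  simp only [mul_kronecker_mul, ← Finset.sum_mul, sum_compAntipode_kronecker]

theorem rightReg_mul_rightReg (a b : ι) :
    H.rightReg a * H.rightReg b = ∑ r, H.mul b a r • H.rightReg r := by
  ext r u
  simpa [Matrix.sum_apply, mul_apply, mul_comm] using H.assoc u b a r

theorem sum_one_smul_rightReg : ∑ r, H.one r • H.rightReg r = 1 := by
  ext r u
  simpa [Matrix.sum_apply, one_apply, eq_comm] using H.mul_one u r

theorem sum_rightReg_kronecker_leftReg_antipodeInv :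
    ∑ n, ∑ h, (H.opcopDual.rightReg n * H.opcopDual.rightReg h) ⊗ₖ
      (H.leftReg h * H.compAntipodeInv H.leftReg n) = 1 := by
  have hconv := H.cop.isRep_leftReg.conv_antipode
  calc _ = ∑ w, H.opcopDual.rightReg w ⊗ₖ
          H.cop.conv H.cop.leftReg (H.cop.compAntipode H.cop.leftReg) w := by
        simp only [rightReg_mul_rightReg, conv, sum_kronecker, kronecker_sum, smul_kronecker,
          kronecker_smul, ← Fintype.sum_prod_type']
        exact Fintype.sum_equiv ⟨fun ⟨n, h, w⟩ => ⟨w, h, n⟩, fun ⟨w, h, n⟩ => ⟨n, h, w⟩,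
          fun _ => rfl, fun _ => rfl⟩ _ _ fun _ => rfl
    _ = (∑ w, H.opcopDual.one w • H.opcopDual.rightReg w) ⊗ₖ 1 := by
        simp only [hconv, kronecker_smul, ← smul_kronecker, ← sum_kronecker]
        rfl
    _ = 1 := by rw [sum_one_smul_rightReg, one_kronecker_one]

theorem pairLInv_mul_pairR :
    H.pairLInv * H.pairR = ∑ m, ∑ n, ∑ h, ∑ z,
      (H.opcopDual.rightReg m * H.opcopDual.rightReg n *
          (H.opcopDual.rightReg h * H.opcopDual.leftReg z)) ⊗ₖ
        (H.compAntipodeInv H.leftReg z * H.leftReg h *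
          (H.rightReg m * H.compAntipodeInv H.leftReg n)) := by
  have hcomm (h m : ι) (X : Matrix ι ι k) :
      H.leftReg h * (H.rightReg m * X) = H.rightReg m * (H.leftReg h * X) := by
    rw [← Matrix.mul_assoc, leftReg_mul_rightReg, Matrix.mul_assoc]
  symm
  calc _ = ∑ m, ∑ z, (H.opcopDual.rightReg m ⊗ₖ (H.compAntipodeInv H.leftReg z * H.rightReg m)) *
          (∑ n, ∑ h, (H.opcopDual.rightReg n * H.opcopDual.rightReg h) ⊗ₖ
            (H.leftReg h * H.compAntipodeInv H.leftReg n)) *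
          (H.opcopDual.leftReg z ⊗ₖ 1) := by
        simp only [Finset.mul_sum, Finset.sum_mul, ← mul_kronecker_mul, Matrix.mul_one, hcomm,
          Matrix.mul_assoc, ← Fintype.sum_prod_type']
        exact Fintype.sum_equiv ⟨fun ⟨m, n, h, z⟩ => ⟨m, z, n, h⟩, fun ⟨m, z, n, h⟩ => ⟨m, n, h, z⟩,
          fun _ => rfl, fun _ => rfl⟩ _ _ fun _ => rfl
    _ = H.pairLInv * H.pairR := by
        simp only [sum_rightReg_kronecker_leftReg_antipodeInv, pairLInv, pairR,
          Matrix.mul_one, ← mul_kronecker_mul, ← leftReg_mul_rightReg, Finset.sum_mul_sum]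
        exact Finset.sum_comm

theorem sum_rtri_smul (ξ : ι → V) (a d : ι) :
    ∑ d', H.rtri a d d' • ξ d' = ∑ m, ∑ n, H.comul a m n •
      ((H.rightReg m * H.compAntipodeInv H.leftReg n) • ξ) d := by
  simp only [rtri, Matrix.Module.smul_apply, mul_apply, compAntipodeInv_apply, Matrix.sum_apply,
    Matrix.smul_apply, rightReg_apply, leftReg_apply, smul_eq_mul, Finset.mul_sum,
    Finset.sum_smul, Finset.smul_sum, smul_smul, ← Fintype.sum_prod_type']
  exact Fintype.sum_equiv ⟨fun ⟨d', m, n, u, w⟩ => ⟨m, n, d', w, u⟩,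
    fun ⟨m, n, d', w, u⟩ => ⟨d', m, n, u, w⟩, fun _ => rfl, fun _ => rfl⟩ _ _
    fun _ => by simp only [Equiv.coe_fn_mk]; congr 1; ring

theorem sum_ltri_smul (α : ι → V) (b c : ι) :
    ∑ p', H.ltri b c p' • α p' = ∑ h, ∑ z, H.compAntipodeInv H.leftReg z c h •
      ((H.opcopDual.rightReg h * H.opcopDual.leftReg z) • α) b := by
  simp only [ltri, Matrix.Module.smul_apply, mul_apply, compAntipodeInv_apply, Matrix.sum_apply,
    Matrix.smul_apply, rightReg_apply, leftReg_apply, smul_eq_mul, Finset.sum_mul,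
    Finset.sum_smul, Finset.smul_sum, smul_smul, ← Fintype.sum_prod_type']
  exact Fintype.sum_equiv ⟨fun ⟨p', g, h, b', z⟩ => ⟨h, z, ⟨p', b'⟩, g⟩,
    fun ⟨h, z, ⟨p', b'⟩, g⟩ => ⟨p', g, h, b', z⟩, fun _ => rfl, fun _ => rfl⟩ _ _
    fun _ => by simp only [Equiv.coe_fn_mk, opcopDual]; congr 1; ring

/-- `α : A → R` and `ξ : A* → R`, given on the bases, satisfy the commutation relation of the
Drinfeld double, `a₁ x₂ ⟨x₁, a₂⟩ = ⟨x₂, a₁⟩ x₁ a₂`. -/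
def Exchange (α ξ : ι → R) : Prop :=
  H.pairL • (fun i : ι × ι => α i.1 * ξ i.2) = H.pairR • (fun i : ι × ι => ξ i.2 * α i.1)

theorem exchange_iff (α ξ : ι → R) : H.Exchange α ξ ↔
    (fun i : ι × ι => α i.1 * ξ i.2) =
      (H.pairLInv * H.pairR) • (fun i : ι × ι => ξ i.2 * α i.1) := by
  rw [Exchange, mul_smul]
  refine ⟨fun h => ?_, fun h => ?_⟩
  · rw [← h, smul_smul, pairLInv_mul_pairL, one_smul]
  · rw [h, smul_smul, pairL_mul_pairLInv, one_smul]

theorem compAntipodeInv_leftReg_mul_leftReg (z h : ι) :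
    H.compAntipodeInv H.leftReg z * H.leftReg h =
      ∑ c, H.compAntipodeInv H.leftReg z c h • H.leftReg c := by
  simp only [compAntipodeInv_apply, Finset.sum_mul, smul_mul_assoc, ← H.isRep_leftReg.map_mul,
    Matrix.sum_apply, Matrix.smul_apply, leftReg_apply, Finset.smul_sum, Finset.sum_smul,
    smul_smul, smul_eq_mul]
  exact Finset.sum_comm

theorem exchange_of_cross {α ξ : ι → R} (h : ∀ q r, α q * ξ r =
      ∑ a, ∑ b, ∑ c, ∑ d, (H.comul q a b * H.mul c d r) •
        ((∑ d', H.rtri a d d' • ξ d') * ∑ p', H.ltri b c p' • α p')) :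
    H.Exchange α ξ := by
  have hξ (h z r : ι) (Y : Matrix ι ι k) :
      ((H.compAntipodeInv H.leftReg z * H.leftReg h * Y) • ξ) r =
        ∑ c, ∑ d, (H.compAntipodeInv H.leftReg z c h * H.mul c d r) • (Y • ξ) d := by
    rw [mul_smul, compAntipodeInv_leftReg_mul_leftReg, Finset.sum_smul, Finset.sum_apply]
    simp only [Matrix.Module.smul_apply (_ • H.leftReg _), Matrix.smul_apply, leftReg_apply,
      smul_eq_mul]
  have hα (m n q : ι) (Y : Matrix ι ι k) :
      ((H.opcopDual.rightReg m * H.opcopDual.rightReg n * Y) • α) q =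
        ∑ a, ∑ b, (H.comul a m n * H.comul q a b) • (Y • α) b := by
    rw [mul_smul, rightReg_mul_rightReg, Finset.sum_smul, Finset.sum_apply]
    simp only [Matrix.Module.smul_apply (_ • H.opcopDual.rightReg _), Matrix.smul_apply,
      rightReg_apply, smul_eq_mul]
    rfl
  rw [exchange_iff, pairLInv_mul_pairR]
  funext ⟨q, r⟩
  simp only [h q r, sum_rtri_smul, sum_ltri_smul, Finset.sum_smul, Finset.sum_apply,
    kronecker_smul_mul_swap, hξ, hα, Finset.sum_mul_sum, smul_mul_smul_comm, Finset.smul_sum,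
    smul_smul]
  simp only [← Fintype.sum_prod_type']
  exact Fintype.sum_equiv ⟨fun ⟨a, b, c, d, m, h, n, z⟩ => ⟨m, n, h, z, c, a, d, b⟩,
    fun ⟨m, n, h, z, c, a, d, b⟩ => ⟨a, b, c, d, m, h, n, z⟩, fun _ => rfl, fun _ => rfl⟩ _ _
    fun _ => by simp only [Equiv.coe_fn_mk]; congr 1; ring

variable {H}

theorem Exchange.opcopDual {α ξ : ι → R} (h : H.Exchange α ξ) :
    H.opcopDual.Exchange (fun r => op (ξ r)) (fun q => op (α q)) := by
  have hL (i j : ι × ι) : H.opcopDual.pairL i j = H.pairL i.swap j.swap := by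
    simp only [pairL, Matrix.sum_apply, kroneckerMap_apply, Prod.fst_swap, Prod.snd_swap]
    exact Finset.sum_congr rfl fun _ _ => mul_comm _ _
  have hR (i j : ι × ι) : H.opcopDual.pairR i j = H.pairR i.swap j.swap := by
    simp only [pairR, Matrix.sum_apply, kroneckerMap_apply, Prod.fst_swap, Prod.snd_swap]
    exact Finset.sum_congr rfl fun _ _ => mul_comm _ _
  funext i
  have hi := congrArg op (congrFun h i.swap)
  simp only [Matrix.Module.smul_apply, Finset.op_sum, op_smul, op_mul] at hi ⊢
  simp only [hL, hR]
  exact ((Equiv.prodComm ι ι).sum_comp fun j => H.pairL i.swap j • (op (ξ j.2) * op (α j.1))).trans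
    (hi.trans ((Equiv.prodComm ι ι).sum_comp fun j =>
      H.pairR i.swap j • (op (α j.1) * op (ξ j.2))).symm)

theorem Exchange.map_mul_of_map_mul_swap {R' : Type*} [Ring R'] [Algebra k R'] {α ξ : ι → R}
    {α' ξ' : ι → R'} (h : H.Exchange α ξ) (h' : H.Exchange α' ξ') (f : R →ₗ[k] R')
    (hf : ∀ p q, f (ξ p * α q) = H.compAntipode α' q * H.opcopDual.compAntipodeInv ξ' p)
    (q r : ι) :
    f (α q * ξ r) = H.opcopDual.compAntipodeInv ξ' r * H.compAntipode α' q := by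
  set θ : Matrix (ι × ι) (ι × ι) k := of H.S ⊗ₖ (of H.Sinv)ᵀ
  let F := f.mapMatrixModule (ι × ι)
  have hαξ : θ • (fun i : ι × ι => α' i.1 * ξ' i.2) =
      fun i => H.compAntipode α' i.1 * H.opcopDual.compAntipodeInv ξ' i.2 :=
    kronecker_smul_mul ..
  have hξα : θ • (fun i : ι × ι => ξ' i.2 * α' i.1) =
      fun i => H.opcopDual.compAntipodeInv ξ' i.2 * H.compAntipode α' i.1 :=
    kronecker_smul_mul_swap ..
  have hF : F (fun i : ι × ι => ξ i.2 * α i.1) = θ • fun i => α' i.1 * ξ' i.2 := by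
    rw [hαξ]
    exact funext fun i => hf i.2 i.1
  have key : H.pairL • F (fun i : ι × ι => α i.1 * ξ i.2) =
      H.pairL • θ • fun i : ι × ι => ξ' i.2 * α' i.1 := by
    calc _ = F (H.pairL • fun i : ι × ι => α i.1 * ξ i.2) := (map_smul F _ _).symm
      _ = H.pairR • θ • fun i : ι × ι => α' i.1 * ξ' i.2 := by rw [h, map_smul, hF]
      _ = θ • H.pairL • fun i : ι × ι => α' i.1 * ξ' i.2 := by
        rw [smul_smul, smul_smul, kronecker_antipode_mul_pairL]
      _ = H.pairL • θ • fun i : ι × ι => ξ' i.2 * α' i.1 := by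
        rw [h', smul_smul, smul_smul, kronecker_antipode_mul_pairR]
  replace key := congrArg (H.pairLInv • ·) key
  simp only [smul_smul, pairLInv_mul_pairL, one_smul, hξα] at key
  exact congrFun key (q, r)

theorem op_conv (F G : ι → R) (q : ι) :
    op (H.conv F G q) = H.cop.conv (fun i => op (G i)) (fun i => op (F i)) q := by
  simp only [conv, Finset.op_sum, op_smul, op_mul]
  exact Finset.sum_comm

theorem compAntipode_op (F : ι → R) (q : ι) :
    H.compAntipode (fun i => op (F i)) q = op (H.compAntipode F q) := by
  simp only [compAntipode_apply, Finset.op_sum, op_smul]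

theorem matrix_smul_semiconjBy {v : R} {F G : ι → R} (h : ∀ q, SemiconjBy v (F q) (G q))
    (M : Matrix ι ι k) (q : ι) : SemiconjBy v ((M • F) q) ((M • G) q) := by
  simp only [SemiconjBy, Matrix.Module.smul_apply, Finset.mul_sum, Finset.sum_mul,
    mul_smul_comm, smul_mul_assoc, (h _).eq]

theorem canonicalElt_compAntipode_left (α ξ : ι → R) :
    canonicalElt (H.compAntipode α) ξ = canonicalElt α (H.opcopDual.compAntipode ξ) :=
  H.sum_compAntipode_left (LinearMap.mul k R) α ξ

theorem canonicalElt_compAntipodeInv_left (α ξ : ι → R) :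
    canonicalElt (H.compAntipodeInv α) ξ = canonicalElt α (H.opcopDual.compAntipodeInv ξ) :=
  H.cop.sum_compAntipode_left (LinearMap.mul k R) α ξ

theorem IsRep.cop {α : ι → R} (h : H.IsRep α) : H.cop.IsRep α := ⟨h.map_mul, h.map_one⟩

theorem IsRep.sum_mul_compAntipodeInv {α : ι → R} (h : H.IsRep α) (a b : ι) :
    ∑ r, H.mul a b r • H.compAntipodeInv α r = H.compAntipodeInv α b * H.compAntipodeInv α a :=
  h.cop.sum_mul_compAntipode a b

theorem IsRep.sum_compAntipodeInv_mul_pairL_smul {α : ι → R} (h : H.IsRep α) (ξ : ι → R) (q : ι) :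
    ∑ r, H.compAntipodeInv α r * (H.pairL • fun i : ι × ι => α i.1 * ξ i.2) (q, r) =
      H.counit q • canonicalElt (H.compAntipodeInv α) ξ := by
  calc _ = ∑ u, ∑ t, ∑ s, H.comul q s t •
          ((∑ r, H.mul t u r • H.compAntipodeInv α r) * (α s * ξ u)) := by
        simp only [pairL, Finset.sum_smul, Finset.sum_apply, kronecker_smul_mul]
        simp only [Matrix.Module.smul_apply, leftReg_apply, opcopDual, Finset.mul_sum,
          Finset.sum_mul, Finset.smul_sum, smul_mul_assoc, mul_smul_comm, smul_smul,
          ← Fintype.sum_prod_type']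
        exact Fintype.sum_equiv ⟨fun ⟨r, t, u, s⟩ => ⟨u, t, s, r⟩,
          fun ⟨u, t, s, r⟩ => ⟨r, t, u, s⟩, fun _ => rfl, fun _ => rfl⟩ _ _
          fun _ => by simp only [Equiv.coe_fn_mk, mul_comm]
    _ = ∑ u, H.compAntipodeInv α u * (H.cop.conv (H.cop.compAntipode α) α q * ξ u) := by
        simp only [h.sum_mul_compAntipodeInv, conv, Finset.sum_mul, Finset.mul_sum, smul_mul_assoc,
          mul_smul_comm, mul_assoc]
        rfl
    _ = H.counit q • canonicalElt (H.compAntipodeInv α) ξ := by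
        simp only [h.cop.antipode_conv, canonicalElt, Finset.smul_sum, smul_mul_assoc,
          _root_.one_mul, mul_smul_comm]
        rfl

theorem IsRep.sum_compAntipodeInv_mul_pairR_smul {α : ι → R} (h : H.IsRep α) (ξ : ι → R) (q : ι) :
    ∑ r, H.compAntipodeInv α r * (H.pairR • fun i : ι × ι => ξ i.2 * α i.1) (q, r) =
      H.conv (H.compAntipodeInv α) (fun q => canonicalElt (H.compAntipodeInv α) ξ * α q) q := by
  calc _ = ∑ t, ∑ s, ∑ u, H.comul q t s •
          ((∑ r, H.mul u t r • H.compAntipodeInv α r) * (ξ u * α s)) := by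
        simp only [pairR, Finset.sum_smul, Finset.sum_apply, kronecker_smul_mul_swap]
        simp only [Matrix.Module.smul_apply, rightReg_apply, opcopDual, Finset.mul_sum,
          Finset.sum_mul, Finset.smul_sum, smul_mul_assoc, mul_smul_comm, smul_smul,
          ← Fintype.sum_prod_type']
        exact Fintype.sum_equiv ⟨fun ⟨r, t, s, u⟩ => ⟨t, s, u, r⟩,
          fun ⟨t, s, u, r⟩ => ⟨r, t, s, u⟩, fun _ => rfl, fun _ => rfl⟩ _ _ fun _ => rfl
    _ = H.conv (H.compAntipodeInv α)
          (fun q => canonicalElt (H.compAntipodeInv α) ξ * α q) q := by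
        simp only [h.sum_mul_compAntipodeInv, conv, canonicalElt, Finset.sum_mul, Finset.mul_sum,
          Finset.smul_sum, mul_assoc]

theorem IsRep.compAntipodeInv_conv_mul {α : ι → R} (h : H.IsRep α) {ξ : ι → R}
    (hαξ : H.Exchange α ξ) :
    H.conv (H.compAntipodeInv α) (fun q => canonicalElt (H.compAntipodeInv α) ξ * α q) =
      fun q => H.counit q • canonicalElt (H.compAntipodeInv α) ξ := by
  funext q
  rw [← h.sum_compAntipodeInv_mul_pairR_smul, ← hαξ, h.sum_compAntipodeInv_mul_pairL_smul]

theorem IsRep.compAntipodeInv_sq_conv {α : ι → R} (h : H.IsRep α) :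
    H.conv (H.compAntipodeInv (H.compAntipodeInv α)) (H.compAntipodeInv α) =
      fun q => H.counit q • 1 := by
  funext q
  apply op_injective
  calc _ = H.cop.conv (fun i => op (H.cop.compAntipode α i))
          (fun i => op (H.cop.compAntipode (H.cop.compAntipode α) i)) q := op_conv ..
    _ = _ := by
        simp only [← compAntipode_op (H.cop.compAntipode α)]
        exact congrFun h.cop.op_compAntipode.conv_antipode q

theorem IsRep.semiconjBy_canonicalElt {α : ι → R} (h : H.IsRep α) {ξ : ι → R}
    (hαξ : H.Exchange α ξ) (q : ι) :
    SemiconjBy (canonicalElt (H.compAntipodeInv α) ξ)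
      (H.compAntipode (H.compAntipode α) q) (α q) := by
  set v := canonicalElt (H.compAntipodeInv α) ξ
  have hv : (fun q => v * α q) = fun q => H.compAntipodeInv (H.compAntipodeInv α) q * v := by
    calc _ = H.conv (H.conv (H.compAntipodeInv (H.compAntipodeInv α)) (H.compAntipodeInv α))
            (fun q => v * α q) := by
          simp only [h.compAntipodeInv_sq_conv, counit_conv, _root_.one_mul]
      _ = _ := by rw [conv_assoc, h.compAntipodeInv_conv_mul hαξ, conv_counit]
  have hSS : SemiconjBy v (H.compAntipode (H.compAntipode α) q) _ :=
    matrix_smul_semiconjBy (matrix_smul_semiconjBy (congrFun hv) (of H.S)) (of H.S) q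
  rwa [← compAntipode, ← compAntipode, compAntipode_compAntipodeInv,
    compAntipode_compAntipodeInv] at hSS

theorem Exchange.semiconjBy_canonicalElt_dual {α ξ : ι → R} (hαξ : H.Exchange α ξ)
    (hξ : H.opcopDual.IsRep fun r => op (ξ r)) (r : ι) :
    SemiconjBy (canonicalElt (H.compAntipodeInv α) ξ)
      (H.opcopDual.compAntipodeInv (H.opcopDual.compAntipodeInv ξ) r) (ξ r) := by
  set v := canonicalElt (H.compAntipodeInv α) ξ
  have hv : canonicalElt (H.opcopDual.compAntipodeInv fun r => op (ξ r)) (fun q => op (α q)) =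
      op v := by
    calc _ = canonicalElt (fun r => op (H.opcopDual.compAntipodeInv ξ r)) fun q => op (α q) :=
          congrArg (canonicalElt · _) (funext fun r => compAntipode_op (H := H.opcopDual.cop) ξ r)
      _ = op v := by rw [canonicalElt_op, ← canonicalElt_compAntipodeInv_left]
  have hS (r : ι) : SemiconjBy v (ξ r)
      (H.opcopDual.compAntipode (H.opcopDual.compAntipode ξ) r) := by
    have h := (hξ.semiconjBy_canonicalElt hαξ.opcopDual r).eq
    simp only [hv, funext (compAntipode_op _), compAntipode_op, ← op_mul] at h
    exact (op_injective h).symm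
  have hTT : SemiconjBy v (H.opcopDual.compAntipodeInv (H.opcopDual.compAntipodeInv ξ) r) _ :=
    matrix_smul_semiconjBy (matrix_smul_semiconjBy hS (of H.opcopDual.Sinv))
      (of H.opcopDual.Sinv) r
  rwa [← compAntipodeInv, ← compAntipodeInv, compAntipodeInv_compAntipode,
    compAntipodeInv_compAntipode] at hTT

theorem IsRep.canonicalElt_compAntipodeInv_mul {α ξ : ι → R} (hα : H.IsRep α)
    (hξ : H.opcopDual.IsRep fun r => op (ξ r)) (hαξ : H.Exchange α ξ) :
    canonicalElt (H.compAntipodeInv α) ξ *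
      canonicalElt (H.compAntipode (H.compAntipode α)) ξ = 1 := by
  set v := canonicalElt (H.compAntipodeInv α) ξ
  have hmul (a b : ι) : ξ a * ξ b = ∑ r, H.comul r a b • ξ r := by
    apply op_injective
    simp only [op_mul, Finset.op_sum, op_smul]
    exact (hξ.map_mul b a).symm
  calc v * canonicalElt (H.compAntipode (H.compAntipode α)) ξ
      = ∑ t, α t * v * ξ t := by
        simp only [canonicalElt.eq_1 (H.compAntipode _), Finset.mul_sum, ← mul_assoc, v,
          (hα.semiconjBy_canonicalElt hαξ _).eq]
    _ = ∑ r, H.cop.conv α (H.cop.compAntipode α) r * ξ r := by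
        simp only [v, canonicalElt, conv, Finset.mul_sum, Finset.sum_mul, mul_assoc, hmul,
          mul_smul_comm, smul_mul_assoc, ← Fintype.sum_prod_type']
        exact Fintype.sum_equiv ⟨fun ⟨x, s, r⟩ => ⟨r, x, s⟩, fun ⟨r, x, s⟩ => ⟨x, s, r⟩,
          fun _ => rfl, fun _ => rfl⟩ _ _ fun _ => rfl
    _ = 1 := by
        simp only [hα.cop.conv_antipode, smul_mul_assoc, _root_.one_mul]
        apply op_injective
        simp only [Finset.op_sum, op_smul]
        exact hξ.map_one

theorem IsRep.canonicalElt_mul_compAntipodeInv {α ξ : ι → R} (hα : H.IsRep α)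
    (hξ : H.opcopDual.IsRep fun r => op (ξ r)) (hαξ : H.Exchange α ξ) :
    canonicalElt (H.compAntipode (H.compAntipode α)) ξ *
      canonicalElt (H.compAntipodeInv α) ξ = 1 := by
  set v := canonicalElt (H.compAntipodeInv α) ξ
  set α₂ := H.compAntipode (H.compAntipode α)
  suffices hcomm : Commute v (canonicalElt α₂ ξ) by
    rw [← hcomm.eq, hα.canonicalElt_compAntipodeInv_mul hξ hαξ]
  have hαS : ∀ t, SemiconjBy v (H.compAntipode (H.compAntipode α₂) t) (α₂ t) :=
    matrix_smul_semiconjBy (matrix_smul_semiconjBy (hα.semiconjBy_canonicalElt hαξ) _) _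
  have hsum : SemiconjBy v (canonicalElt (H.compAntipode (H.compAntipode α₂))
      (H.opcopDual.compAntipodeInv (H.opcopDual.compAntipodeInv ξ))) (canonicalElt α₂ ξ) := by
    simp only [SemiconjBy, canonicalElt, Finset.mul_sum, Finset.sum_mul]
    exact Finset.sum_congr rfl fun t _ =>
      ((hαS t).mul_right (hαξ.semiconjBy_canonicalElt_dual hξ t)).eq
  rwa [canonicalElt_compAntipode_left, compAntipode_compAntipodeInv,
    canonicalElt_compAntipode_left, compAntipode_compAntipodeInv] at hsum

theorem Exchange.map_map_mul {α ξ : ι → R} (h : H.Exchange α ξ) (f : R →ₗ[k] R)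
    (hf : ∀ p q, f (ξ p * α q) = H.compAntipode α q * H.opcopDual.compAntipodeInv ξ p)
    (p q : ι) :
    f (f (ξ p * α q)) = H.opcopDual.compAntipodeInv (H.opcopDual.compAntipodeInv ξ) p *
      H.compAntipode (H.compAntipode α) q := by
  set θ : Matrix (ι × ι) (ι × ι) k := of H.S ⊗ₖ (of H.Sinv)ᵀ
  let F := f.mapMatrixModule (ι × ι)
  have hαξ : θ • (fun i : ι × ι => α i.1 * ξ i.2) =
      fun i => H.compAntipode α i.1 * H.opcopDual.compAntipodeInv ξ i.2 :=
    kronecker_smul_mul ..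
  have hFαξ : F (fun i : ι × ι => α i.1 * ξ i.2) =
      fun i => H.opcopDual.compAntipodeInv ξ i.2 * H.compAntipode α i.1 :=
    funext fun i => h.map_mul_of_map_mul_swap h f hf i.1 i.2
  have hθ := congrFun (map_smul F θ fun i => α i.1 * ξ i.2) (q, p)
  rw [hFαξ, hαξ] at hθ
  rw [hf]
  exact hθ.trans (congrFun (kronecker_smul_mul_swap ..) (q, p))

theorem IsRep.map_map_mul_eq_conj {α ξ : ι → R} (hα : H.IsRep α)
    (hξ : H.opcopDual.IsRep fun r => op (ξ r)) (hαξ : H.Exchange α ξ) (f : R →ₗ[k] R)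
    (hf : ∀ p q, f (ξ p * α q) = H.compAntipode α q * H.opcopDual.compAntipodeInv ξ p)
    (p q : ι) :
    f (f (ξ p * α q)) = canonicalElt (H.compAntipode (H.compAntipode α)) ξ * (ξ p * α q) *
      canonicalElt (H.compAntipodeInv α) ξ := by
  have hdv := hα.canonicalElt_mul_compAntipodeInv hξ hαξ
  have hconj := (hαξ.semiconjBy_canonicalElt_dual hξ p).mul_right
    (hα.semiconjBy_canonicalElt hαξ q)
  rw [hαξ.map_map_mul f hf, mul_assoc, ← hconj.eq, ← mul_assoc, hdv, _root_.one_mul]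

section Coordinates

theorem sum_smul_map_e (j : (ι → k) →ₗ[k] V) (x : ι → k) : ∑ i, x i • j (e i) = j x := by
  simp only [← map_smul, ← map_sum]
  congr 1
  funext r
  simp [e]

theorem map_SA_e (j : (ι → k) →ₗ[k] V) (q : ι) :
    j (H.SA (e q)) = H.compAntipode (fun t => j (e t)) q := by
  rw [← sum_smul_map_e]
  simp [SA, e, compAntipode_apply]

theorem map_SA_SA_e (j : (ι → k) →ₗ[k] V) (q : ι) :
    j (H.SA (H.SA (e q))) = H.compAntipode (H.compAntipode fun t => j (e t)) q := by
  rw [← sum_smul_map_e]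
  simp only [SA, e, compAntipode_apply, ite_mul, _root_.one_mul, zero_mul, Finset.sum_ite_eq,
    Finset.mem_univ, if_true, Finset.smul_sum, Finset.sum_smul, smul_smul]
  exact Finset.sum_comm

theorem map_SAinv_e (j : (ι → k) →ₗ[k] V) (q : ι) :
    j (H.SAinv (e q)) = H.compAntipodeInv (fun t => j (e t)) q := by
  rw [← sum_smul_map_e]
  simp [SAinv, e, compAntipodeInv_apply]

theorem map_SXinv_e (j : (ι → k) →ₗ[k] V) (p : ι) :
    j (H.SXinv (e p)) = H.opcopDual.compAntipodeInv (fun t => j (e t)) p := by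
  rw [← sum_smul_map_e]
  simp [SXinv, e, compAntipodeInv_apply, opcopDual]

theorem isRep_of_map_mulA {j : (ι → k) →ₗ[k] R} (hmul : ∀ a b, j (H.mulA a b) = j a * j b)
    (hone : j H.oneA = 1) : H.IsRep fun t => j (e t) where
  map_mul a b := by
    rw [← hmul, ← sum_smul_map_e j (H.mulA _ _)]
    simp [mulA, e]
  map_one := (sum_smul_map_e j H.oneA).trans hone

theorem isRep_op_of_map_mulX {j : (ι → k) →ₗ[k] R} (hmul : ∀ x y, j (H.mulX x y) = j x * j y)
    (hone : j H.oneX = 1) : H.opcopDual.IsRep fun t => op (j (e t)) where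
  map_mul a b := by
    rw [← op_mul, ← hmul, ← sum_smul_map_e j (H.mulX _ _)]
    simp [mulX, e, opcopDual]
  map_one := by
    simp only [← op_smul, ← Finset.op_sum]
    exact congrArg op ((sum_smul_map_e j H.oneX).trans hone)

theorem exchange_of_map_cross {jX jA : (ι → k) →ₗ[k] R}
    (hcross : ∀ q r, jA (e q) * jX (e r) =
      ∑ a, ∑ b, ∑ c, ∑ d, (H.comul q a b * H.mul c d r) •
        (jX (H.rtri a d) * jA (H.ltri b c))) :
    H.Exchange (fun t => jA (e t)) fun t => jX (e t) :=
  H.exchange_of_cross fun q r => by simpa only [sum_smul_map_e] using hcross q r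

end Coordinates

end FinHopfSC

open FinHopfSC in
theorem stmt5_general (k : Type*) [Field k] (ι : Type*) [Fintype ι] [DecidableEq ι]
    (H : FinHopfSC k ι)
    (D : Type*) [Ring D] [Algebra k D] (jX jA : (ι → k) →ₗ[k] D)
    (hA : ∀ a b, jA (H.mulA a b) = jA a * jA b) (hA1 : jA H.oneA = 1)
    (hX : ∀ x y, jX (H.mulX x y) = jX x * jX y) (hX1 : jX H.oneX = 1)
    (hsurj : Function.Surjective
      (fun c : ι → ι → k => ∑ p, ∑ q, c p q • (jX (e p) * jA (e q))))
    (hcross : ∀ q r, jA (e q) * jX (e r) =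
      ∑ a, ∑ b, ∑ c, ∑ d, (H.comul q a b * H.mul c d r) •
        (jX (H.rtri a d) * jA (H.ltri b c)))
    (SD : D →ₗ[k] D)
    (hSD : ∀ p q, SD (jX (e p) * jA (e q)) = jA (H.SA (e q)) * jX (H.SXinv (e p))) (u : D) :
    SD (SD u) =
      (∑ t, jA (H.SA (H.SA (e t))) * jX (e t)) * u * (∑ t, jA (H.SAinv (e t)) * jX (e t)) := by
  have hα : H.IsRep fun t => jA (e t) := isRep_of_map_mulA hA hA1
  have hξ : H.opcopDual.IsRep fun t => MulOpposite.op (jX (e t)) := isRep_op_of_map_mulX hX hX1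
  have hαξ : H.Exchange (fun t => jA (e t)) fun t => jX (e t) := exchange_of_map_cross hcross
  have hSDαξ (p q : ι) : SD (jX (e p) * jA (e q)) = H.compAntipode (fun t => jA (e t)) q *
      H.opcopDual.compAntipodeInv (fun t => jX (e t)) p := by
    rw [hSD, map_SA_e, map_SXinv_e]
  obtain ⟨c, rfl⟩ := hsurj u
  simp only [map_SA_SA_e, map_SAinv_e, ← canonicalElt.eq_1, map_sum, map_smul, Finset.mul_sum,
    Finset.sum_mul, mul_smul_comm, smul_mul_assoc, hα.map_map_mul_eq_conj hξ hαξ SD hSDαξ]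

open FinHopfSC in
/-- in the Drinfeld double `D(A)` of a finite-dimensional Hopf
algebra `A`, the square of the antipode `S_{D(A)}` (which is determined by
`S_{D(A)}(x ⊗ a) = S(a) S⁻¹(x)`) is conjugation by `d₀ = ∑ t, S²(a_t) x_t`:
`S²_{D(A)}(u) = d₀ u d₀⁻¹` for every `u ∈ D(A)`. -/
theorem stmt5 (k : Type*) [Field k] (ι : Type*) [Fintype ι] [DecidableEq ι]
    (H : FinHopfSC k ι)
    (D : Type*) [Ring D] [Algebra k D] (jX jA : (ι → k) →ₗ[k] D)
    (hA : ∀ a b, jA (H.mulA a b) = jA a * jA b) (hA1 : jA H.oneA = 1)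
    (hX : ∀ x y, jX (H.mulX x y) = jX x * jX y) (hX1 : jX H.oneX = 1)
    (hbij : Function.Bijective
      (fun c : ι → ι → k => ∑ p, ∑ q, c p q • (jX (e p) * jA (e q))))
    (hcross : ∀ q r, jA (e q) * jX (e r) =
      ∑ a, ∑ b, ∑ c, ∑ d, (H.comul q a b * H.mul c d r) •
        (jX (H.rtri a d) * jA (H.ltri b c)))
    (SD : D →ₗ[k] D)
    (hSD : ∀ p q, SD (jX (e p) * jA (e q)) = jA (H.SA (e q)) * jX (H.SXinv (e p)))
    (hinv : (∑ t, jA (H.SA (H.SA (e t))) * jX (e t)) *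
        (∑ t, jA (H.SAinv (e t)) * jX (e t)) = 1 ∧
      (∑ t, jA (H.SAinv (e t)) * jX (e t)) *
        (∑ t, jA (H.SA (H.SA (e t))) * jX (e t)) = 1) :
    ∀ u : D, SD (SD u) =
      (∑ t, jA (H.SA (H.SA (e t))) * jX (e t)) * u * (∑ t, jA (H.SAinv (e t)) * jX (e t)) :=
  stmt5_general k ι H D jX jA hA hA1 hX hX1 hbij.2 hcross SD hSD
end

section
/- Let A be a finite-dimensional Hopf algebra and let H = A* # A be the Heisenberg double (smash product of A* with A under the left regular action a ⇀ x = x₍₁₎⟨x₍₂₎, a⟩). Define α : A* → H, α(x) = x # 1, and β : A* → H, β(x) = Σ_t ad_{x_t}(x) # a_t = Σ_t (x_t)₍₂₎ x S⁻¹((x_t)₍₁₎) # a_t, where {a_t} is a basis of A with dual basis {x_t}. Then for all x, y ∈ A*, α(x)β(y) = β(y)α(x) in H. -/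
namespace FinHopfSC

variable {k : Type*} [Field k] {ι : Type*} [Fintype ι] [DecidableEq ι]
variable (H : FinHopfSC k ι)

/-- the multiplication of the Heisenberg double `H(A*) = A* # A`
(the smash product of `A*` with `A` for the left regular action):
`(x # a)(y # b) = x (a₍₁₎ ⇀ y) # a₍₂₎ b`.  An element of the Heisenberg double
is recorded by its coefficient matrix `c`, where `c p q` is the coefficient of
the basis element `x_p # a_q`. -/
def smashMul (c d : ι → ι → k) : ι → ι → k := fun u v =>
  ∑ p, ∑ q, ∑ r, ∑ s, ∑ a, ∑ b, c p q * d r s * H.comul q a b *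
    (H.mulX (e p) (H.hit (e a) (e r))) u * (H.mulA (e b) (e s)) v

/-- the identity element `1 # 1` of the Heisenberg double. -/
def smashOne : ι → ι → k := fun u v => H.counit u * H.one v

/-- the source map `α : A* → A* # A`, `x ↦ x # 1`. -/
def alphaH (x : ι → k) : ι → ι → k := fun u v => x u * H.one v

/-- the target map `β : A* → A* # A`, `x ↦ ∑ t, ad_{x_t} x # a_t`. -/
def betaH (x : ι → k) : ι → ι → k := fun u v => H.adX (e v) x u

end FinHopfSC

/-!
Let `T = S⁻¹` be the inverse antipode of `X = A*` and `ad_x y = x₍₂₎ y T(x₍₁₎)`. Since `T` is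
antimultiplicative, `ad` is an action of `X` on itself; since `T : X → Xᵐᵒᵖ` is the convolution
inverse of `op : X → Xᵐᵒᵖ`, it satisfies `∑ ad_{x₍₂₎}(y) x₍₁₎ = x y`. Replacing `y` by `ad_z y`
gives `∑ ad_{x₍₂₎ z}(y) x₍₁₎ = x ad_z(y)`.

An element of the Heisenberg double is the same as a linear map `C : X → X`, sending `x_v` to the
left tensor factor of `a_v`. In these terms `β(y)` is `z ↦ ad_z y`, left multiplication by
`α(x)` is `z ↦ x C(z)` and right multiplication by `α(x)` is `z ↦ ∑ C(x₍₂₎ z) x₍₁₎`, so the last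
identity is exactly `β(y) α(x) = α(x) β(y)`.
-/

open Coalgebra HopfAlgebra MulOpposite WithConv
open scoped TensorProduct

section HopfAlgebra

variable {R X : Type*} [CommSemiring R] [Semiring X] [HopfAlgebra R X]

/-- The inverse of a bijective antipode, as an algebra homomorphism into the opposite algebra.
Bijectivity is encoded by a linear equivalence `S` lifting the antipode. -/
def antipodeSymmAlgHomOp (S : X ≃ₗ[R] X) (hS : S.toLinearMap = antipode R) : X →ₐ[R] Xᵐᵒᵖ :=
  have map_one' : S 1 = 1 := by simp [← S.coe_coe, hS]
  have map_mul' (a b : X) : S (a * b) = S b * S a := by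
    simp [← S.coe_coe, hS, antipode_mul_antidistrib]
  .ofLinearMap ((opLinearEquiv R).toLinearMap ∘ₗ S.symm.toLinearMap)
    (unop_injective <| S.injective <| by simp [map_one'])
    fun a b ↦ unop_injective <| S.injective <| by simp [map_mul']

variable (S : X ≃ₗ[R] X) (hS : S.toLinearMap = antipode R)

@[simp]
lemma antipodeSymmAlgHomOp_apply (a : X) : antipodeSymmAlgHomOp S hS a = op (S.symm a) := rfl

/-- The left adjoint action `a • y = a₍₂₎ y S⁻¹(a₍₁₎)` of a Hopf algebra with bijective antipode `S`
on itself, i.e. the usual adjoint action for the opposite coproduct. -/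
def coopAd : X →ₐ[R] Module.End R X :=
  (AlgHom.mulLeftRight R X).comp <|
    (Algebra.TensorProduct.map (.id R X) (antipodeSymmAlgHomOp S hS)).comp <|
      (Algebra.TensorProduct.comm R X X).toAlgHom.comp (Bialgebra.comulAlgHom R X)

lemma coopAd_apply {ι : Type*} {a : X} (𝓡 : Repr R a ι) (y : X) :
    coopAd S hS a y = ∑ i ∈ 𝓡.index, 𝓡.right i * y * S.symm (𝓡.left i) := by
  simp [coopAd, ← 𝓡.eq]

lemma op_convMul_antipodeSymm :
    toConv (opLinearEquiv R : X ≃ₗ[R] Xᵐᵒᵖ).toLinearMap *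
      toConv (antipodeSymmAlgHomOp S hS).toLinearMap = 1 := by
  ext a
  have h := congr(antipodeSymmAlgHomOp S hS $(sum_antipode_mul_eq_algebraMap_counit (ℛ R a)))
  simp only [map_sum, map_mul, ← hS] at h
  simpa [(ℛ R a).convMul_apply] using h

lemma sum_coopAd_right_mul_left {ι : Type*} {a : X} (𝓡 : Repr R a ι) (y : X) :
    ∑ i ∈ 𝓡.index, coopAd S hS (𝓡.right i) y * 𝓡.left i = a * y := by
  let o : WithConv (X →ₗ[R] Xᵐᵒᵖ) := toConv (opLinearEquiv R).toLinearMap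
  let T := toConv (antipodeSymmAlgHomOp S hS).toLinearMap
  let f := toConv ((opLinearEquiv R).toLinearMap ∘ₗ LinearMap.mulRight R y)
  let ad := toConv ((opLinearEquiv R).toLinearMap ∘ₗ (coopAd S hS).toLinearMap.flip y)
  have h_ad : ad = T * f := by
    ext b
    simp [ad, T, f, coopAd_apply S hS (ℛ R b), (ℛ R b).convMul_apply, mul_assoc]
  have h : o * ad = f := by
    rw [h_ad, ← mul_assoc, op_convMul_antipodeSymm, one_mul]
  simpa [o, ad, f, 𝓡.convMul_apply, ← op_mul, ← Finset.op_sum] using congr($h a)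

theorem sum_coopAd_right_mul_mul_left {ι : Type*} {a : X} (𝓡 : Repr R a ι) (b y : X) :
    ∑ i ∈ 𝓡.index, coopAd S hS (𝓡.right i * b) y * 𝓡.left i = a * coopAd S hS b y := by
  simpa using sum_coopAd_right_mul_left S hS 𝓡 (coopAd S hS b y)

end HopfAlgebra

/-- The dual Hopf algebra `A*`, in coordinates with respect to the dual basis. A type synonym of
`ι → k`, which would otherwise carry the pointwise product instead of the convolution product. -/
def DualHopf {k : Type*} [Field k] {ι : Type*} [Fintype ι] [DecidableEq ι]
    (_ : FinHopfSC k ι) : Type _ := ι → k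

namespace DualHopf

variable {k : Type*} [Field k] {ι : Type*} [Fintype ι] [DecidableEq ι] (H : FinHopfSC k ι)

instance : AddCommGroup (DualHopf H) := inferInstanceAs (AddCommGroup (ι → k))

instance : Module k (DualHopf H) := inferInstanceAs (Module k (ι → k))

/-- The basis `x_t` of `A*` dual to the basis `a_t` of `A`. -/
noncomputable def basis : Module.Basis ι k (DualHopf H) := Pi.basisFun k ι

variable {H}

@[ext]
lemma ext {x y : DualHopf H} (h : ∀ r, x r = y r) : x = y := funext h

@[simp] lemma add_apply (x y : DualHopf H) (r : ι) : (x + y) r = x r + y r := rfl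

@[simp] lemma smul_apply (c : k) (x : DualHopf H) (r : ι) : (c • x) r = c * x r := rfl

@[simp] lemma zero_apply (r : ι) : (0 : DualHopf H) r = 0 := rfl

@[simp] lemma sum_apply {κ : Type*} (s : Finset κ) (f : κ → DualHopf H) (r : ι) :
    (∑ i ∈ s, f i) r = ∑ i ∈ s, f i r :=
  Finset.sum_apply r s f

lemma basis_eq_e (i : ι) : basis H i = FinHopfSC.e i := by
  funext j
  exact (congrFun (Pi.basisFun_apply k ι i) j).trans <| by
    simp [FinHopfSC.e, Pi.single_apply, eq_comm]

@[simp]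
lemma basis_apply (i j : ι) : basis H i j = if i = j then 1 else 0 :=
  congrFun (basis_eq_e i) j

@[simp]
lemma basis_repr_apply (x : DualHopf H) (i : ι) : (basis H).repr x i = x i := rfl

instance : Mul (DualHopf H) := ⟨H.mulX⟩

lemma mul_apply (x y : DualHopf H) (r : ι) :
    (x * y) r = ∑ s, ∑ t, H.comul r s t * x s * y t := rfl

instance : NonUnitalNonAssocRing (DualHopf H) where
  left_distrib x y z := ext fun r ↦ by simp [mul_apply, mul_add, Finset.sum_add_distrib]
  right_distrib x y z := ext fun r ↦ by
    simp [mul_apply, mul_add, add_mul, Finset.sum_add_distrib]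
  zero_mul x := ext fun r ↦ by simp [mul_apply]
  mul_zero x := ext fun r ↦ by simp [mul_apply]

instance : IsScalarTower k (DualHopf H) (DualHopf H) where
  smul_assoc c x y := ext fun r ↦ by
    simp only [smul_eq_mul, mul_apply, smul_apply, Finset.mul_sum, mul_assoc, mul_left_comm c]

instance : SMulCommClass k (DualHopf H) (DualHopf H) where
  smul_comm c x y := ext fun r ↦ by
    simp only [smul_eq_mul, mul_apply, smul_apply, Finset.mul_sum, mul_left_comm c]

lemma basis_mul_basis (s t : ι) : basis H s * basis H t = ∑ r, H.comul r s t • basis H r := by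
  ext r
  simp [mul_apply]

instance : One (DualHopf H) := ⟨H.counit⟩

lemma one_apply (r : ι) : (1 : DualHopf H) r = H.counit r := rfl

lemma one_eq_sum : (1 : DualHopf H) = ∑ r, H.counit r • basis H r := by
  ext r
  simp [one_apply]

lemma basis_mul_assoc (a b c : ι) :
    basis H a * basis H b * basis H c = basis H a * (basis H b * basis H c) := by
  ext r
  simpa [basis_mul_basis, Finset.sum_mul, Finset.mul_sum, smul_mul_assoc, mul_smul_comm, mul_comm]
    using H.coassoc r a b c

instance : Ring (DualHopf H) where
  mul_assoc x y z := by
    let m := LinearMap.mul' k (DualHopf H)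
    have h : m ∘ₗ m.rTensor (DualHopf H) =
        m ∘ₗ m.lTensor (DualHopf H) ∘ₗ (TensorProduct.assoc k _ _ _).toLinearMap :=
      (((basis H).tensorProduct (basis H)).tensorProduct (basis H)).ext fun ⟨⟨a, b⟩, c⟩ ↦ by
        simp [m, basis_mul_assoc]
    exact congr($h ((x ⊗ₜ y) ⊗ₜ z))
  one_mul x := by
    have h : LinearMap.mulLeft k (1 : DualHopf H) = .id := (basis H).ext fun t ↦ by
      ext r
      simpa [one_eq_sum, Finset.sum_mul, basis_mul_basis, smul_mul_assoc, mul_smul_comm, mul_comm,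
        eq_comm] using H.counit_comul r t
    exact congr($h x)
  mul_one x := by
    have h : LinearMap.mulRight k (1 : DualHopf H) = .id := (basis H).ext fun t ↦ by
      ext r
      simpa [one_eq_sum, Finset.mul_sum, basis_mul_basis, smul_mul_assoc, mul_smul_comm, mul_comm,
        eq_comm] using H.comul_counit r t
    exact congr($h x)

noncomputable instance : Algebra k (DualHopf H) := .ofModule smul_mul_assoc mul_smul_comm

/-- The left regular action of the basis vector `a_a` of `A` on `A*`, written `x ↦ a_a ⇀ x`, with
`⟨a_a ⇀ x, b⟩ = ⟨x, b a_a⟩`. -/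
noncomputable def hit (a : ι) : DualHopf H →ₗ[k] DualHopf H :=
  Matrix.toLin (basis H) (basis H) (.of fun r t ↦ H.mul r a t)

lemma hit_apply (a : ι) (x : DualHopf H) (r : ι) : hit a x r = ∑ t, H.mul r a t * x t := by
  simp [hit, Matrix.toLin_apply, Matrix.mulVec, dotProduct]

lemma hit_eq_sum (a : ι) (x : DualHopf H) :
    hit a x = ∑ r, (∑ t, H.mul r a t * x t) • basis H r := by
  ext r
  simp [hit_apply]

noncomputable instance : CoalgebraStruct k (DualHopf H) where
  comul := ∑ a, (TensorProduct.mk k _ _).flip (basis H a) ∘ₗ hit a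
  counit := (basis H).constr k H.one

lemma comul_eq_sum (x : DualHopf H) : comul (R := k) x = ∑ a, hit a x ⊗ₜ[k] basis H a := by
  simp [comul]

@[simp]
lemma counit_basis (r : ι) : counit (R := k) (basis H r) = H.one r :=
  (basis H).constr_basis k _ r

lemma comul_repr (x : DualHopf H) (a b : ι) :
    ((basis H).tensorProduct (basis H)).repr (comul (R := k) x) (a, b) = hit b x a := by
  simp [comul_eq_sum, Finsupp.single_apply]

noncomputable instance : Coalgebra k (DualHopf H) where
  coassoc := (basis H).ext fun r ↦
    ((basis H).tensorProduct ((basis H).tensorProduct (basis H))).ext_elem fun ⟨a, b, c⟩ ↦ by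
      simpa [Finsupp.single_apply, comul_eq_sum, hit_apply, TensorProduct.sum_tmul,
        mul_comm] using H.assoc a b c r
  rTensor_counit_comp_comul := (basis H).ext fun r ↦
    (TensorProduct.lid k (DualHopf H)).injective <| ext fun t ↦ by
      simpa [comul_eq_sum, hit_eq_sum, mul_comm, eq_comm] using H.one_mul t r
  lTensor_counit_comp_comul := (basis H).ext fun r ↦
    (TensorProduct.rid k (DualHopf H)).injective <| ext fun t ↦ by
      simpa [comul_eq_sum, hit_apply, mul_comm, eq_comm] using H.mul_one t r

lemma comul_basis_mul_basis (a b : ι) :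
    comul (R := k) (basis H a * basis H b) = comul (basis H a) * comul (basis H b) :=
  ((basis H).tensorProduct (basis H)).ext_elem fun ⟨s, t⟩ ↦ by
    rw [comul_repr, hit_apply]
    simp only [basis_mul_basis, smul_apply, basis_apply, comul_eq_sum, map_sum, Finset.sum_mul,
      Algebra.TensorProduct.tmul_mul_tmul, Finsupp.coe_finsetSum, Finset.sum_apply,
      Module.Basis.tensorProduct_repr_tmul_apply, basis_repr_apply, smul_eq_mul, mul_apply,
      hit_apply, mul_ite, mul_one, mul_zero, Finset.sum_ite_eq, Finset.sum_ite_eq',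
      Finset.mem_univ, if_true, H.comul_mul, Finset.mul_sum, ← Fintype.sum_prod_type']
    exact Fintype.sum_equiv
      ⟨fun (s₁, s₂, t₁, t₂) ↦ ((t₂, t₁), s₁, s₂), fun ((t₂, t₁), s₁, s₂) ↦ (s₁, s₂, t₁, t₂),
        fun _ ↦ rfl, fun _ ↦ rfl⟩ _ _ fun _ ↦ by
          simp only [Equiv.coe_fn_mk]
          ring

noncomputable instance : Bialgebra k (DualHopf H) where
  counit_one := by simpa [one_eq_sum, mul_comm] using H.counit_one
  mul_compr₂_counit := (basis H).ext fun a ↦ (basis H).ext fun b ↦ by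
    simpa [basis_mul_basis, mul_comm] using H.comul_one a b
  comul_one := ((basis H).tensorProduct (basis H)).ext_elem fun ⟨a, b⟩ ↦ by
    rw [comul_repr, hit_apply, Algebra.TensorProduct.one_def,
      Module.Basis.tensorProduct_repr_tmul_apply]
    exact (H.counit_mul a b).trans (mul_comm _ _)
  mul_compr₂_comul := (basis H).ext fun a ↦ (basis H).ext fun b ↦ comul_basis_mul_basis a b

/-- The antipode of `A*`, the transpose of the antipode of `A`, as a linear equivalence: its inverse
is the transpose of `Sinv`. -/
noncomputable def antipodeEquiv : DualHopf H ≃ₗ[k] DualHopf H :=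
  Matrix.toLinOfInv (basis H) (basis H) (M := .of H.S) (M' := .of H.Sinv)
    (Matrix.ext fun a r ↦ H.S_Sinv a r) (Matrix.ext fun a r ↦ H.Sinv_S a r)

lemma antipodeEquiv_apply (x : DualHopf H) (t : ι) :
    antipodeEquiv x t = ∑ r, H.S t r * x r := by
  simp [antipodeEquiv, Matrix.toLinOfInv, Matrix.toLin_apply, Matrix.mulVec, dotProduct]

lemma antipodeEquiv_symm_apply (x : DualHopf H) (t : ι) :
    antipodeEquiv.symm x t = ∑ r, H.Sinv t r * x r := by
  change (Matrix.toLin (basis H) (basis H) (.of H.Sinv) x : DualHopf H) t = _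
  simp [Matrix.toLin_apply, Matrix.mulVec, dotProduct]

noncomputable instance : HopfAlgebra k (DualHopf H) where
  antipode := antipodeEquiv.toLinearMap
  mul_antipode_rTensor_comul := (basis H).ext fun t ↦ ext fun r ↦ by
    have h : H.one t * (1 : DualHopf H) r = _ :=
      (mul_comm _ _).trans (H.antipode_left r t).symm
    simpa [comul_eq_sum, hit_apply, mul_apply, antipodeEquiv_apply,
      Algebra.algebraMap_eq_smul_one, h, Finset.mul_sum, mul_assoc] using Finset.sum_comm
  mul_antipode_lTensor_comul := (basis H).ext fun t ↦ ext fun r ↦ by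
    have h : H.one t * (1 : DualHopf H) r = _ :=
      (mul_comm _ _).trans (H.antipode_right r t).symm
    simp only [LinearMap.coe_comp, Function.comp_apply, comul_eq_sum, map_sum,
      LinearMap.lTensor_tmul, LinearEquiv.coe_coe, LinearMap.mul'_apply, sum_apply, mul_apply,
      hit_apply, basis_apply, mul_ite, mul_one, mul_zero, Finset.sum_ite_eq, Finset.mem_univ,
      if_true, antipodeEquiv_apply, counit_basis, Algebra.linearMap_apply,
      Algebra.algebraMap_eq_smul_one, smul_apply, h, mul_right_comm]
    exact .trans Finset.sum_comm (Finset.sum_congr rfl fun a _ ↦ Finset.sum_comm)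

/-- The expression `Δ x = ∑ t, (a_t ⇀ x) ⊗ x_t` of the coproduct of `A*`. -/
noncomputable def comulRepr (x : DualHopf H) : Repr k x ι where
  index := .univ
  left a := hit a x
  right := basis H
  eq := (comul_eq_sum x).symm

lemma adX_eq_sum (x y : DualHopf H) : H.adX x y = ∑ p, ∑ a, ∑ b,
    (H.mul a b p * x p) • (basis H b * (y * antipodeEquiv.symm (basis H a)) : DualHopf H) := by
  have h_antipode (a : ι) : H.SXinv (FinHopfSC.e a) = antipodeEquiv.symm (basis H a) := by
    ext t
    rw [antipodeEquiv_symm_apply, basis_eq_e, FinHopfSC.SXinv]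
  ext r
  simp only [FinHopfSC.adX, h_antipode, basis_eq_e, sum_apply]
  rfl

lemma adX_eq_coopAd (x y : DualHopf H) : H.adX x y = coopAd antipodeEquiv rfl x y := by
  rw [coopAd_apply _ _ (comulRepr x)]
  simp only [adX_eq_sum, comulRepr, hit_eq_sum, Finset.sum_smul, map_sum, map_smul,
    Finset.mul_sum, mul_smul_comm, mul_assoc]
  exact Finset.sum_comm_cycle.trans (Finset.sum_congr rfl fun b _ ↦ Finset.sum_comm)

variable (H)

/-- The column of `a_v` in a coefficient matrix `c`: the element `x` of the dual such that `x # a_v`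
is the `a_v`-component of the element of the Heisenberg double recorded by `c`. -/
def column (c : ι → ι → k) (v : ι) : DualHopf H := fun u ↦ c u v

variable {H}

lemma column_apply (c : ι → ι → k) (u v : ι) : column H c v u = c u v := rfl

lemma column_smashMul (c d : ι → ι → k) (v : ι) :
    column H (H.smashMul c d) v =
      ∑ a, ∑ b, (∑ q, H.comul q a b • column H c q) * hit a (∑ s, H.mul b s v • column H d s) := by
  ext u
  simp only [column_apply, FinHopfSC.smashMul, FinHopfSC.mulX, FinHopfSC.mulA, FinHopfSC.hit,
    FinHopfSC.e, map_sum, map_smul, mul_smul_comm, smul_mul_assoc, sum_apply, smul_apply,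
    mul_apply, hit_apply, mul_ite, ite_mul, mul_one, one_mul, mul_zero, zero_mul,
    Finset.sum_ite_eq, Finset.sum_ite_irrel, Finset.sum_const_zero, Finset.mem_univ, if_true,
    Finset.mul_sum, Finset.sum_mul, ← Fintype.sum_prod_type']
  exact Fintype.sum_equiv
    ⟨fun (p, q, r, s, a, b, i) ↦ (a, (b, s), q, p, i, r),
      fun (a, (b, s), q, p, i, r) ↦ (p, q, r, s, a, b, i), fun _ ↦ rfl, fun _ ↦ rfl⟩ _ _
    fun _ ↦ by
      simp only [Equiv.coe_fn_mk]
      ring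

lemma column_alphaH (x : DualHopf H) (q : ι) : column H (H.alphaH x) q = H.one q • x :=
  ext fun _ ↦ mul_comm _ _

lemma column_betaH (y : DualHopf H) (v : ι) :
    column H (H.betaH y) v = coopAd antipodeEquiv rfl (basis H v) y := by
  rw [← adX_eq_coopAd, basis_eq_e]
  rfl

lemma sum_one_smul_hit (x : DualHopf H) : ∑ a, H.one a • hit a x = x := by
  simpa [comulRepr] using
    congr(TensorProduct.rid k (DualHopf H) $(sum_tmul_counit_eq (comulRepr x)))

lemma column_smashMul_alphaH_left (x : DualHopf H) (c : ι → ι → k) (v : ι) :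
    column H (H.smashMul (H.alphaH x) c) v = x * column H c v := by
  have h_mul : ∑ b, H.one b • ∑ s, H.mul b s v • column H c s = column H c v := by
    simp only [Finset.smul_sum, smul_smul]
    rw [Finset.sum_comm]
    simp [← Finset.sum_smul, H.one_mul]
  calc
    column H (H.smashMul (H.alphaH x) c) v
      = ∑ a, ∑ b, ((H.one a * H.one b) • x) * hit a (∑ s, H.mul b s v • column H c s) := by
        simp only [column_smashMul, column_alphaH, smul_smul, ← Finset.sum_smul, ← H.comul_one,
          mul_comm (H.one _)]
    _ = x * ∑ a, H.one a • hit a (∑ b, H.one b • ∑ s, H.mul b s v • column H c s) := by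
        simp only [Finset.mul_sum, map_sum, map_smul, smul_mul_assoc, mul_smul_comm,
          Finset.smul_sum, smul_smul, mul_left_comm, mul_comm]
    _ = x * column H c v := by rw [h_mul, sum_one_smul_hit]

lemma column_smashMul_alphaH_right {c : ι → ι → k} {L : DualHopf H →ₗ[k] DualHopf H}
    (hc : ∀ q, column H c q = L (basis H q)) (x : DualHopf H) (v : ι) :
    column H (H.smashMul c (H.alphaH x)) v = ∑ a, L (basis H a * basis H v) * hit a x := by
  simp only [column_smashMul, column_alphaH, hc, smul_smul, ← Finset.sum_smul,
    mul_comm (H.mul _ _ _), H.mul_one]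
  simp [basis_mul_basis, apply_ite (hit _)]

theorem column_smashMul_alphaH_betaH (x y : DualHopf H) (v : ι) :
    column H (H.smashMul (H.alphaH x) (H.betaH y)) v =
      column H (H.smashMul (H.betaH y) (H.alphaH x)) v := by
  let ad : DualHopf H →ₐ[k] Module.End k (DualHopf H) := coopAd antipodeEquiv rfl
  calc
    column H (H.smashMul (H.alphaH x) (H.betaH y)) v
      = x * ad (basis H v) y := by rw [column_smashMul_alphaH_left, column_betaH]
    _ = ∑ a, ad (basis H a * basis H v) y * hit a x :=
        (sum_coopAd_right_mul_mul_left antipodeEquiv rfl (comulRepr x) (basis H v) y).symm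
    _ = column H (H.smashMul (H.betaH y) (H.alphaH x)) v :=
        (column_smashMul_alphaH_right (L := ad.toLinearMap.flip y) (column_betaH y) x v).symm

end DualHopf

/-- in the Heisenberg double `H(A*) = A* # A` of a
finite-dimensional Hopf algebra, the images of the source map `α(x) = x # 1`
and the target map `β(y) = ∑ t, ad_{x_t}(y) # a_t` commute:
`α(x) β(y) = β(y) α(x)` for all `x, y ∈ A*`. -/
theorem stmt8 (k : Type*) [Field k] (ι : Type*) [Fintype ι] [DecidableEq ι]
    (H : FinHopfSC k ι) (x y : ι → k) :
    H.smashMul (H.alphaH x) (H.betaH y) = H.smashMul (H.betaH y) (H.alphaH x) := by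
  funext u v
  exact congrFun (DualHopf.column_smashMul_alphaH_betaH (H := H) x y v) u
end

section
/- Let q be a primitive d-th root of unity, d > 1 odd, and let H be the algebra over ℂ with generators E, K, κ, η and relations KE = q²EK, K^d = 1, E^d = 0, κη = q⁻²ηκ, κ^d = 1, η^d = 0, Kκ = q²κK, Kη = ηK, Eκ = κE, Eη = ηE + κK (the Heisenberg double of the Taft algebra dual). Then the elements η^i κ^j E^m K^n for 0 ≤ i, j, m, n ≤ d−1 span H, and the assignment τ(κ) = q²κ + (q²−1)ηEK⁻¹, τ(η) = ηK⁻¹, τ(K) = K⁻¹, τ(E) = −EK⁻¹ extends to an algebra anti-homomorphism τ : H → H. -/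
/-- The defining relations of the Heisenberg double `H` of the dual of the Taft
algebra: generators `E` (index `0`), `K` (index `1`), `κ` (index `2`),
`η` (index `3`) and relations `KE = q²EK`, `K^d = 1`, `E^d = 0`,
`κη = q⁻²ηκ`, `κ^d = 1`, `η^d = 0`, `Kκ = q²κK`, `Kη = ηK`, `Eκ = κE`,
`Eη = ηE + κK`. -/
inductive HeisRel (q : ℂ) (d : ℕ) :
    FreeAlgebra ℂ (Fin 4) → FreeAlgebra ℂ (Fin 4) → Prop
  | KE : HeisRel q d (FreeAlgebra.ι ℂ 1 * FreeAlgebra.ι ℂ 0)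
      (q ^ 2 • (FreeAlgebra.ι ℂ 0 * FreeAlgebra.ι ℂ 1))
  | K_pow : HeisRel q d (FreeAlgebra.ι ℂ 1 ^ d) 1
  | E_pow : HeisRel q d (FreeAlgebra.ι ℂ 0 ^ d) 0
  | kappa_eta : HeisRel q d (FreeAlgebra.ι ℂ 2 * FreeAlgebra.ι ℂ 3)
      ((q ^ 2)⁻¹ • (FreeAlgebra.ι ℂ 3 * FreeAlgebra.ι ℂ 2))
  | kappa_pow : HeisRel q d (FreeAlgebra.ι ℂ 2 ^ d) 1
  | eta_pow : HeisRel q d (FreeAlgebra.ι ℂ 3 ^ d) 0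
  | K_kappa : HeisRel q d (FreeAlgebra.ι ℂ 1 * FreeAlgebra.ι ℂ 2)
      (q ^ 2 • (FreeAlgebra.ι ℂ 2 * FreeAlgebra.ι ℂ 1))
  | K_eta : HeisRel q d (FreeAlgebra.ι ℂ 1 * FreeAlgebra.ι ℂ 3)
      (FreeAlgebra.ι ℂ 3 * FreeAlgebra.ι ℂ 1)
  | E_kappa : HeisRel q d (FreeAlgebra.ι ℂ 0 * FreeAlgebra.ι ℂ 2)
      (FreeAlgebra.ι ℂ 2 * FreeAlgebra.ι ℂ 0)
  | E_eta : HeisRel q d (FreeAlgebra.ι ℂ 0 * FreeAlgebra.ι ℂ 3)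
      (FreeAlgebra.ι ℂ 3 * FreeAlgebra.ι ℂ 0 +
        FreeAlgebra.ι ℂ 2 * FreeAlgebra.ι ℂ 1)

/-! Put `p = q²` and `F = EK⁻¹`. Then `Fη - ηF = κ`, `κF = pFκ` and `ηκ = pκη`, so that
`T = τ(κ) = pκ + (p - 1)ηF` equals `pFη - ηF` and commutes with `F`, `η` and `κ`. Consequently
`(T - pκ)(T - p²κ) ⋯ (T - pⁿκ) = (p - 1)ⁿ ηⁿ Fⁿ`. As `p` is a primitive `d`-th root of unity, the
case `n = d` reads `T ^ d - κ ^ d = (p - 1) ^ d η ^ d F ^ d = 0`, which is the only relation of `H`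
whose preservation by `τ` is not a matter of moving generators past each other.

For the spanning statement, the span of the monomials is stable under left multiplication by `η`,
`κ` and `K`, and then by `E`, because `Eη = ηE + κK` moves `E` past the powers of `η`. -/

open MulOpposite Polynomial

section QCommute

variable {R A : Type*} [CommSemiring R] [Semiring A] [Algebra R A] {a b b' : A} {c c' : R}

/-- The elements `a` and `b` of an algebra commute up to the scalar `c`: `a b = c b a`. -/
def QCommute (c : R) (a b : A) : Prop :=
  a * b = c • (b * a)

theorem qCommute_one_iff : QCommute (1 : R) a b ↔ Commute a b := by
  rw [QCommute, one_smul, commute_iff_eq]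

namespace QCommute

protected theorem eq (h : QCommute c a b) : a * b = c • (b * a) :=
  h

theorem op (h : QCommute c a b) : QCommute c (op b) (op a) := by
  rw [QCommute, ← op_mul, ← op_mul, ← op_smul, h]

theorem mul_right (h : QCommute c a b) (h' : QCommute c' a b') :
    QCommute (c * c') a (b * b') := by
  rw [QCommute, ← mul_assoc, h, smul_mul_assoc, mul_assoc, h', mul_smul_comm, smul_smul, mul_assoc]

theorem mul_left (h : QCommute c b a) (h' : QCommute c' b' a) :
    QCommute (c * c') (b * b') a := by
  rw [QCommute, mul_assoc, h', mul_smul_comm, ← mul_assoc, h, smul_mul_assoc, smul_smul, mul_assoc,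
    mul_comm]

theorem pow_right (h : QCommute c a b) (n : ℕ) : QCommute (c ^ n) a (b ^ n) := by
  induction n with
  | zero => simp [QCommute]
  | succ n ih => simpa only [pow_succ] using ih.mul_right h

theorem pow_left (h : QCommute c a b) (n : ℕ) : QCommute (c ^ n) (a ^ n) b := by
  induction n with
  | zero => simp [QCommute]
  | succ n ih => simpa only [pow_succ] using ih.mul_left h

theorem add_right (h : QCommute c a b) (h' : QCommute c a b') : QCommute c a (b + b') := by
  rw [QCommute, mul_add, h, h', add_mul, smul_add]

theorem smul_right (h : QCommute c a b) (r : R) : QCommute c a (r • b) := by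
  rw [QCommute, mul_smul_comm, h, smul_mul_assoc, smul_comm]

theorem mul_pow (h : QCommute c b a) (n : ℕ) :
    (a * b) ^ n = c ^ n.choose 2 • (a ^ n * b ^ n) := by
  induction n with
  | zero => simp
  | succ n ih =>
    calc (a * b) ^ (n + 1) = c ^ n.choose 2 • (a ^ n * (b ^ n * a) * b) := by
          rw [pow_succ, ih, smul_mul_assoc]
          simp only [mul_assoc]
      _ = c ^ (n + 1).choose 2 • (a ^ (n + 1) * b ^ (n + 1)) := by
          rw [h.pow_left n, mul_smul_comm, smul_mul_assoc, smul_smul, ← pow_add,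
            Nat.choose_succ_succ' n 1, Nat.choose_one_right, add_comm n, pow_succ a, pow_succ b]
          simp only [mul_assoc]

end QCommute

theorem QCommute.symm {𝕜 A : Type*} [Semifield 𝕜] [Semiring A] [Algebra 𝕜 A] {a b : A} {c : 𝕜}
    (h : QCommute c⁻¹ a b) (hc : c ≠ 0) : QCommute c b a := by
  rw [QCommute, h, smul_inv_smul₀ hc]

theorem QCommute.pow_pred_left {𝕜 A : Type*} [Semifield 𝕜] [Semiring A] [Algebra 𝕜 A] {a b : A}
    {c : 𝕜} {d : ℕ} (h : QCommute c a b) (hc : c ^ d = 1) (hd : d ≠ 0) :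
    QCommute c⁻¹ (a ^ (d - 1)) b := by
  have hinv : c ^ (d - 1) = c⁻¹ := eq_inv_of_mul_eq_one_left (by rw [pow_sub_one_mul hd, hc])
  exact hinv ▸ h.pow_left (d - 1)

theorem QCommute.neg_right {R A : Type*} [CommSemiring R] [Ring A] [Algebra R A] {a b : A} {c : R}
    (h : QCommute c a b) : QCommute c a (-b) := by
  rw [QCommute, mul_neg, h, neg_mul, smul_neg]

end QCommute

/-- Homogenization of `X ^ d - 1 = ∏ (X - p ^ i)`, obtained by specializing its version over `R[Y]`
at `X = a`, `Y = b`. -/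
theorem pow_sub_pow_eq_prod_of_isPrimitiveRoot {R A : Type*} [CommRing R] [IsDomain R] [Ring A]
    [Algebra R A] {a b : A} {p : R} {d : ℕ} (hab : Commute a b) (hp : IsPrimitiveRoot p d)
    (hd : d ≠ 0) :
    a ^ d - b ^ d = ((List.range d).map fun i ↦ a - p ^ (i + 1) • b).prod := by
  have hba (f : R[X]) : Commute (aeval b f) a :=
    (Algebra.commute_of_mem_adjoin_singleton_of_commute (aeval_mem_adjoin_singleton R b) hab).symm
  let φ : R[X][X] →+* A := eval₂RingHom' (aeval b : R[X] →ₐ[R] A).toRingHom a hba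
  have hfactor : (X ^ d - C (X ^ d) : R[X][X]) =
      ((List.range d).map fun i ↦ X - C (C p ^ i * (C p * X))).prod := by
    refine X_pow_sub_C_eq_prod (hp.map_of_injective C_injective) (Nat.pos_of_ne_zero hd) ?_
    rw [mul_pow, ← C_pow, hp.pow_eq_one, C_1, one_mul]
  have hφ_X : φ X = a := eval₂_X _ _
  have hφ_C (f : R[X]) : φ (C f) = aeval b f := eval₂_C _ _
  have hφ_factor (i : ℕ) : φ (X - C (C p ^ i * (C p * X))) = a - p ^ (i + 1) • b := by
    rw [← mul_assoc, ← pow_succ, ← C_pow, map_sub, hφ_X, hφ_C, ← smul_eq_C_mul, map_smul, aeval_X]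
  calc a ^ d - b ^ d = φ (X ^ d - C (X ^ d)) := by
        rw [map_sub, map_pow, hφ_X, hφ_C, map_pow, aeval_X]
    _ = ((List.range d).map fun i ↦ a - p ^ (i + 1) • b).prod := by
        simp only [hfactor, map_list_prod, List.map_map, Function.comp_def, hφ_factor]

section QOscillator

variable {R A : Type*} [CommRing R] [Ring A] [Algebra R A] {p : R} {F κ η : A}

/-- A `q`-oscillator triple with parameter `p`: `F` and `η` act as annihilation and creation
operators whose commutator `κ` commutes with them up to powers of `p`. In the Heisenberg double,
`F = EK⁻¹`. -/
structure QOscillator (p : R) (F κ η : A) : Prop where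
  F_mul_η : F * η = η * F + κ
  κ_F : QCommute p κ F
  η_κ : QCommute p η κ

/-- The central element `pκ + (p - 1)ηF` of the algebra generated by a `q`-oscillator triple. -/
def casimir (p : R) (F κ η : A) : A :=
  p • κ + (p - 1) • (η * F)

namespace QOscillator

theorem casimir_eq (h : QOscillator p F κ η) : casimir p F κ η = p • (F * η) - η * F := by
  rw [casimir, h.F_mul_η, smul_add, sub_smul, one_smul]
  abel

theorem commute_casimir_F (h : QOscillator p F κ η) : Commute (casimir p F κ η) F := by
  calc casimir p F κ η * F = p • (κ * F) + (p - 1) • (η * F * F) := by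
        rw [casimir, add_mul, smul_mul_assoc, smul_mul_assoc]
    _ = p • (F * κ) + (p - 1) • ((η * F + κ) * F) := by
        rw [add_mul, h.κ_F]
        module
    _ = F * casimir p F κ η := by
        rw [casimir, ← h.F_mul_η, mul_add, mul_smul_comm, mul_smul_comm, mul_assoc]

theorem commute_casimir_η (h : QOscillator p F κ η) : Commute (casimir p F κ η) η := by
  calc casimir p F κ η * η = p • (κ * η) + (p - 1) • (η * (F * η)) := by
        rw [casimir, add_mul, smul_mul_assoc, smul_mul_assoc, mul_assoc]
    _ = p • (η * κ) + (p - 1) • (η * (η * F)) := by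
        rw [h.F_mul_η, mul_add, h.η_κ]
        module
    _ = η * casimir p F κ η := by
        rw [casimir, mul_add, mul_smul_comm, mul_smul_comm]

theorem commute_casimir_κ (h : QOscillator p F κ η) : Commute (casimir p F κ η) κ := by
  have hκ : κ = F * η - η * F := eq_sub_of_add_eq' h.F_mul_η.symm
  have hcomm : Commute (casimir p F κ η) (F * η - η * F) :=
    (h.commute_casimir_F.mul_right h.commute_casimir_η).sub_right
      (h.commute_casimir_η.mul_right h.commute_casimir_F)
  exact hκ ▸ hcomm

theorem pow_mul_pow_mul_casimir_sub (h : QOscillator p F κ η) (n : ℕ) :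
    η ^ n * F ^ n * (casimir p F κ η - p ^ (n + 1) • κ) =
      (p - 1) • (η ^ (n + 1) * F ^ (n + 1)) := by
  have hF : F ^ n * (casimir p F κ η - p ^ (n + 1) • κ) = (casimir p F κ η - p • κ) * F ^ n := by
    rw [mul_sub, sub_mul, (h.commute_casimir_F.pow_right n).eq, smul_mul_assoc, h.κ_F.pow_right n,
      smul_smul, ← pow_succ', mul_smul_comm]
  rw [mul_assoc, hF, casimir, add_sub_cancel_left, pow_succ η, pow_succ' F]
  simp only [mul_assoc, smul_mul_assoc, mul_smul_comm]

theorem prod_casimir_sub (h : QOscillator p F κ η) (n : ℕ) :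
    ((List.range n).map fun i ↦ casimir p F κ η - p ^ (i + 1) • κ).prod =
      (p - 1) ^ n • (η ^ n * F ^ n) := by
  induction n with
  | zero => simp
  | succ n ih =>
    rw [List.prod_range_succ, ih, smul_mul_assoc, h.pow_mul_pow_mul_casimir_sub, smul_smul,
      ← pow_succ]

theorem casimir_pow [IsDomain R] {d : ℕ} (h : QOscillator p F κ η) (hp : IsPrimitiveRoot p d)
    (hd : d ≠ 0) : casimir p F κ η ^ d = κ ^ d + (p - 1) ^ d • (η ^ d * F ^ d) := by
  rw [← h.prod_casimir_sub, ← pow_sub_pow_eq_prod_of_isPrimitiveRoot h.commute_casimir_κ hp hd,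
    add_sub_cancel]

end QOscillator

end QOscillator

section Span

variable {R A : Type*} [CommSemiring R] [Semiring A] [Algebra R A]

theorem mul_mem_span_of_forall_mul_mem {s : Set A} {a : A}
    (h : ∀ x ∈ s, a * x ∈ Submodule.span R s) :
    ∀ x ∈ Submodule.span R s, a * x ∈ Submodule.span R s :=
  Submodule.span_le (p := (Submodule.span R s).comap (LinearMap.mulLeft R a)).2 h

theorem eq_top_of_adjoin_eq_top_of_mul_mem {t : Set A} (ht : Algebra.adjoin R t = ⊤)
    {S : Submodule R A} (h_one : 1 ∈ S) (h_mul : ∀ a ∈ t, ∀ x ∈ S, a * x ∈ S) : S = ⊤ := by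
  have h_all (a : A) : ∀ x ∈ S, a * x ∈ S := by
    have ha : a ∈ Algebra.adjoin R t := ht ▸ Algebra.mem_top
    induction ha using Algebra.adjoin_induction with
    | mem a ha => exact h_mul a ha
    | algebraMap r => exact fun x hx ↦ Algebra.smul_def r x ▸ S.smul_mem r hx
    | add a b _ _ iha ihb => exact fun x hx ↦ add_mul a b x ▸ S.add_mem (iha x hx) (ihb x hx)
    | mul a b _ _ iha ihb => exact fun x hx ↦ mul_assoc a b x ▸ iha _ (ihb x hx)
  exact Submodule.eq_top_iff'.2 fun a ↦ mul_one a ▸ h_all a 1 h_one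

end Span

/-- The defining relations of the Heisenberg double, with parameter `p = q²`, for elements
`E`, `K`, `κ`, `η` of an arbitrary algebra; the fields are named after the constructors of
`HeisRel`. -/
structure HeisenbergRelations {𝕜 A : Type*} [Field 𝕜] [Ring A] [Algebra 𝕜 A] (p : 𝕜) (d : ℕ)
    (E K κ η : A) : Prop where
  KE : QCommute p K E
  K_pow : K ^ d = 1
  E_pow : E ^ d = 0
  kappa_eta : QCommute p⁻¹ κ η
  kappa_pow : κ ^ d = 1
  eta_pow : η ^ d = 0
  K_kappa : QCommute p K κ
  K_eta : Commute K η
  E_kappa : Commute E κ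
  E_eta : E * η = η * E + κ * K

/-- The ordered monomials `η ^ i * κ ^ j * E ^ m * K ^ n` with all exponents below `d`. -/
def orderedMonomials {A : Type*} [Monoid A] (d : ℕ) (E K κ η : A) : Set A :=
  {x | ∃ i j m n : Fin d, x = η ^ (i : ℕ) * κ ^ (j : ℕ) * E ^ (m : ℕ) * K ^ (n : ℕ)}

namespace HeisenbergRelations

variable {𝕜 A : Type*} [Field 𝕜] [Ring A] [Algebra 𝕜 A] {p : 𝕜} {d : ℕ} {E K κ η : A}

theorem monomial_mem_span (h : HeisenbergRelations p d E K κ η) (hd : d ≠ 0) (i j m n : ℕ) :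
    η ^ i * κ ^ j * E ^ m * K ^ n ∈ Submodule.span 𝕜 (orderedMonomials d E K κ η) := by
  have hpos : 0 < d := Nat.pos_of_ne_zero hd
  rcases le_or_gt d i with hi | hi
  · simp [pow_eq_zero_of_le hi h.eta_pow]
  rcases le_or_gt d m with hm | hm
  · simp [pow_eq_zero_of_le hm h.E_pow]
  rw [pow_eq_pow_mod j h.kappa_pow, pow_eq_pow_mod n h.K_pow]
  exact Submodule.subset_span
    ⟨⟨i, hi⟩, ⟨j % d, Nat.mod_lt j hpos⟩, ⟨m, hm⟩, ⟨n % d, Nat.mod_lt n hpos⟩, rfl⟩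

theorem eta_mul_mem_span (h : HeisenbergRelations p d E K κ η) (hd : d ≠ 0) :
    ∀ x ∈ Submodule.span 𝕜 (orderedMonomials d E K κ η),
      η * x ∈ Submodule.span 𝕜 (orderedMonomials d E K κ η) := by
  refine mul_mem_span_of_forall_mul_mem ?_
  rintro _ ⟨i, j, m, n, rfl⟩
  simpa only [pow_succ', mul_assoc] using h.monomial_mem_span hd (i + 1) j m n

theorem kappa_mul_mem_span (h : HeisenbergRelations p d E K κ η) (hd : d ≠ 0) :
    ∀ x ∈ Submodule.span 𝕜 (orderedMonomials d E K κ η),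
      κ * x ∈ Submodule.span 𝕜 (orderedMonomials d E K κ η) := by
  refine mul_mem_span_of_forall_mul_mem ?_
  rintro _ ⟨i, j, m, n, rfl⟩
  have hmove : κ * (η ^ (i : ℕ) * κ ^ (j : ℕ) * E ^ (m : ℕ) * K ^ (n : ℕ)) =
      p⁻¹ ^ (i : ℕ) • (η ^ (i : ℕ) * κ ^ (j + 1 : ℕ) * E ^ (m : ℕ) * K ^ (n : ℕ)) := by
    simp only [← mul_assoc]
    rw [h.kappa_eta.pow_right i]
    simp only [pow_succ', mul_assoc, smul_mul_assoc]
  exact hmove ▸ Submodule.smul_mem _ _ (h.monomial_mem_span hd i (j + 1) m n)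

theorem K_mul_mem_span (h : HeisenbergRelations p d E K κ η) (hd : d ≠ 0) :
    ∀ x ∈ Submodule.span 𝕜 (orderedMonomials d E K κ η),
      K * x ∈ Submodule.span 𝕜 (orderedMonomials d E K κ η) := by
  refine mul_mem_span_of_forall_mul_mem ?_
  rintro _ ⟨i, j, m, n, rfl⟩
  have hK := (((qCommute_one_iff (R := 𝕜)).2 (h.K_eta.pow_right i)).mul_right
    (h.K_kappa.pow_right j)).mul_right (h.KE.pow_right m)
  rw [← mul_assoc, hK, smul_mul_assoc, mul_assoc _ K, ← pow_succ']
  exact Submodule.smul_mem _ _ (h.monomial_mem_span hd i j m (n + 1))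

theorem E_mul_mem_span (h : HeisenbergRelations p d E K κ η) (hd : d ≠ 0) :
    ∀ x ∈ Submodule.span 𝕜 (orderedMonomials d E K κ η),
      E * x ∈ Submodule.span 𝕜 (orderedMonomials d E K κ η) := by
  set S := Submodule.span 𝕜 (orderedMonomials d E K κ η)
  have hmem (i j m n : ℕ) : E * (η ^ i * (κ ^ j * E ^ m * K ^ n)) ∈ S := by
    induction i with
    | zero =>
      have hmove : E * (κ ^ j * E ^ m * K ^ n) = κ ^ j * E ^ (m + 1) * K ^ n := by
        rw [← mul_assoc, ← mul_assoc, (h.E_kappa.pow_right j).eq, mul_assoc _ E, ← pow_succ']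
      simpa [hmove] using h.monomial_mem_span hd 0 j (m + 1) n
    | succ i ih =>
      have hmove (x : A) : E * (η * x) = η * (E * x) + κ * (K * x) := by
        rw [← mul_assoc, h.E_eta, add_mul, mul_assoc, mul_assoc]
      rw [pow_succ', mul_assoc, hmove]
      refine S.add_mem (h.eta_mul_mem_span hd _ ih) ?_
      refine h.kappa_mul_mem_span hd _ (h.K_mul_mem_span hd _ ?_)
      simpa only [mul_assoc] using h.monomial_mem_span hd i j m n
  refine mul_mem_span_of_forall_mul_mem ?_
  rintro _ ⟨i, j, m, n, rfl⟩
  simpa only [mul_assoc] using hmem i j m n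

theorem span_orderedMonomials_eq_top (h : HeisenbergRelations p d E K κ η) (hd : d ≠ 0)
    (hgen : Algebra.adjoin 𝕜 {E, K, κ, η} = ⊤) :
    Submodule.span 𝕜 (orderedMonomials d E K κ η) = ⊤ := by
  refine eq_top_of_adjoin_eq_top_of_mul_mem hgen ?_ ?_
  · simpa using h.monomial_mem_span hd 0 0 0 0
  · rintro _ (rfl | rfl | rfl | rfl)
    exacts [h.E_mul_mem_span hd, h.K_mul_mem_span hd, h.kappa_mul_mem_span hd,
      h.eta_mul_mem_span hd]

theorem K_mul_K_pow_pred (h : HeisenbergRelations p d E K κ η) (hd : d ≠ 0) :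
    K * K ^ (d - 1) = 1 := by
  rw [mul_pow_sub_one hd, h.K_pow]

theorem qCommute_K_pow_pred_F (h : HeisenbergRelations p d E K κ η) (hp : p ^ d = 1)
    (hd : d ≠ 0) : QCommute p⁻¹ (K ^ (d - 1)) (E * K ^ (d - 1)) := by
  simpa only [mul_one] using
    (h.KE.pow_pred_left hp hd).mul_right (qCommute_one_iff.2 (Commute.refl (K ^ (d - 1))))

theorem qOscillator (h : HeisenbergRelations p d E K κ η) (hp : p ^ d = 1) (hd : d ≠ 0) :
    QOscillator p (E * K ^ (d - 1)) κ η where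
  F_mul_η := by
    rw [mul_assoc, (h.K_eta.pow_left (d - 1)).eq, ← mul_assoc, h.E_eta, add_mul, mul_assoc κ,
      h.K_mul_K_pow_pred hd, mul_one, mul_assoc]
  κ_F := by
    have hFκ := (qCommute_one_iff.2 h.E_kappa).mul_left (h.K_kappa.pow_pred_left hp hd)
    exact (one_mul p⁻¹ ▸ hFκ).symm (IsUnit.of_pow_eq_one hp hd |>.ne_zero)
  η_κ := h.kappa_eta.symm (IsUnit.of_pow_eq_one hp hd |>.ne_zero)

theorem qCommute_K_pow_pred_casimir (h : HeisenbergRelations p d E K κ η) (hp : p ^ d = 1)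
    (hd : d ≠ 0) : QCommute p⁻¹ (K ^ (d - 1)) (casimir p (E * K ^ (d - 1)) κ η) := by
  have hη : QCommute (1 : 𝕜) (K ^ (d - 1)) η := qCommute_one_iff.2 (h.K_eta.pow_left (d - 1))
  have hηF := one_mul p⁻¹ ▸ hη.mul_right (h.qCommute_K_pow_pred_F hp hd)
  exact ((h.K_kappa.pow_pred_left hp hd).smul_right p).add_right (hηF.smul_right (p - 1))

theorem E_mul_K_pow_pred_pow_eq_zero (h : HeisenbergRelations p d E K κ η) (hp : p ^ d = 1)
    (hd : d ≠ 0) : (E * K ^ (d - 1)) ^ d = 0 := by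
  rw [(h.KE.pow_pred_left hp hd).mul_pow, h.E_pow, zero_mul, smul_zero]

theorem eta_mul_K_pow_pred_pow_eq_zero (h : HeisenbergRelations p d E K κ η) :
    (η * K ^ (d - 1)) ^ d = 0 := by
  rw [(h.K_eta.pow_left (d - 1)).symm.mul_pow, h.eta_pow, zero_mul]

theorem casimir_pow_eq_one (h : HeisenbergRelations p d E K κ η) (hp : IsPrimitiveRoot p d)
    (hd : d ≠ 0) : casimir p (E * K ^ (d - 1)) κ η ^ d = 1 := by
  rw [(h.qOscillator hp.pow_eq_one hd).casimir_pow hp hd, h.kappa_pow, h.eta_pow, zero_mul,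
    smul_zero, add_zero]

theorem E_eta_opposite (h : HeisenbergRelations p d E K κ η) (hp : p ^ d = 1) (hd : d ≠ 0) :
    η * K ^ (d - 1) * -(E * K ^ (d - 1)) =
      -(E * K ^ (d - 1)) * (η * K ^ (d - 1)) +
        K ^ (d - 1) * casimir p (E * K ^ (d - 1)) κ η := by
  have hLF := h.qCommute_K_pow_pred_F hp hd
  have hLT := h.qCommute_K_pow_pred_casimir hp hd
  have hT := (h.qOscillator hp hd).casimir_eq
  have hp0 : p ≠ 0 := IsUnit.of_pow_eq_one hp hd |>.ne_zero
  set L := K ^ (d - 1)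
  set F := E * L
  calc η * L * -F = -(p⁻¹ • (η * F * L)) := by
        rw [mul_neg, mul_assoc, hLF, mul_smul_comm, mul_assoc η F]
    _ = -(F * η * L) + p⁻¹ • ((p • (F * η) - η * F) * L) := by
        rw [sub_mul, smul_mul_assoc, smul_sub, inv_smul_smul₀ hp0]
        abel
    _ = -F * (η * L) + L * casimir p F κ η := by
        rw [hLT, hT, neg_mul, mul_assoc]

theorem opposite (h : HeisenbergRelations p d E K κ η) (hp : IsPrimitiveRoot p d) (hd : d ≠ 0) :
    HeisenbergRelations p d (op (-(E * K ^ (d - 1)))) (op (K ^ (d - 1)))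
      (op (casimir p (E * K ^ (d - 1)) κ η)) (op (η * K ^ (d - 1))) where
  KE := ((h.qCommute_K_pow_pred_F hp.pow_eq_one hd).neg_right.symm (hp.ne_zero hd)).op
  K_pow := by rw [← op_pow, pow_right_comm, h.K_pow, one_pow, op_one]
  E_pow := by
    rw [← op_pow, neg_pow, h.E_mul_K_pow_pred_pow_eq_zero hp.pow_eq_one hd, mul_zero, op_zero]
  kappa_eta := by
    have hηT := (qCommute_one_iff (R := 𝕜)).2
      (h.qOscillator hp.pow_eq_one hd).commute_casimir_η.symm
    exact (one_mul p⁻¹ ▸ hηT.mul_left (h.qCommute_K_pow_pred_casimir hp.pow_eq_one hd)).op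
  kappa_pow := by rw [← op_pow, h.casimir_pow_eq_one hp hd, op_one]
  eta_pow := by rw [← op_pow, h.eta_mul_K_pow_pred_pow_eq_zero, op_zero]
  K_kappa := ((h.qCommute_K_pow_pred_casimir hp.pow_eq_one hd).symm (hp.ne_zero hd)).op
  K_eta := ((h.K_eta.pow_left (d - 1)).mul_right (Commute.refl _)).op
  E_kappa := (h.qOscillator hp.pow_eq_one hd).commute_casimir_F.symm.neg_left.op
  E_eta := by
    simp only [← op_mul, ← op_add]
    exact congrArg op (h.E_eta_opposite hp.pow_eq_one hd)

end HeisenbergRelations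

section Presentation

theorem heisenbergRelations_mkAlgHom (q : ℂ) (d : ℕ) :
    HeisenbergRelations (q ^ 2) d (RingQuot.mkAlgHom ℂ (HeisRel q d) (FreeAlgebra.ι ℂ 0))
      (RingQuot.mkAlgHom ℂ (HeisRel q d) (FreeAlgebra.ι ℂ 1))
      (RingQuot.mkAlgHom ℂ (HeisRel q d) (FreeAlgebra.ι ℂ 2))
      (RingQuot.mkAlgHom ℂ (HeisRel q d) (FreeAlgebra.ι ℂ 3)) where
  KE := by simpa only [QCommute, map_mul, map_smul] using RingQuot.mkAlgHom_rel ℂ (@HeisRel.KE q d)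
  K_pow := by simpa only [map_pow, map_one] using RingQuot.mkAlgHom_rel ℂ (@HeisRel.K_pow q d)
  E_pow := by simpa only [map_pow, map_zero] using RingQuot.mkAlgHom_rel ℂ (@HeisRel.E_pow q d)
  kappa_eta := by
    simpa only [QCommute, map_mul, map_smul] using RingQuot.mkAlgHom_rel ℂ (@HeisRel.kappa_eta q d)
  kappa_pow := by
    simpa only [map_pow, map_one] using RingQuot.mkAlgHom_rel ℂ (@HeisRel.kappa_pow q d)
  eta_pow := by simpa only [map_pow, map_zero] using RingQuot.mkAlgHom_rel ℂ (@HeisRel.eta_pow q d)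
  K_kappa := by
    simpa only [QCommute, map_mul, map_smul] using RingQuot.mkAlgHom_rel ℂ (@HeisRel.K_kappa q d)
  K_eta := by
    simpa only [commute_iff_eq, map_mul] using RingQuot.mkAlgHom_rel ℂ (@HeisRel.K_eta q d)
  E_kappa := by
    simpa only [commute_iff_eq, map_mul] using RingQuot.mkAlgHom_rel ℂ (@HeisRel.E_kappa q d)
  E_eta := by simpa only [map_mul, map_add] using RingQuot.mkAlgHom_rel ℂ (@HeisRel.E_eta q d)

theorem adjoin_mkAlgHom_ι_eq_top (q : ℂ) (d : ℕ) :
    Algebra.adjoin ℂ {RingQuot.mkAlgHom ℂ (HeisRel q d) (FreeAlgebra.ι ℂ 0),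
      RingQuot.mkAlgHom ℂ (HeisRel q d) (FreeAlgebra.ι ℂ 1),
      RingQuot.mkAlgHom ℂ (HeisRel q d) (FreeAlgebra.ι ℂ 2),
      RingQuot.mkAlgHom ℂ (HeisRel q d) (FreeAlgebra.ι ℂ 3)} = ⊤ := by
  have hι : Set.range (FreeAlgebra.ι ℂ : Fin 4 → FreeAlgebra ℂ (Fin 4)) =
      {FreeAlgebra.ι ℂ 0, FreeAlgebra.ι ℂ 1, FreeAlgebra.ι ℂ 2, FreeAlgebra.ι ℂ 3} := by
    ext x
    simp [Fin.exists_fin_succ, eq_comm]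
  have hmap := AlgHom.map_adjoin (RingQuot.mkAlgHom ℂ (HeisRel q d)) (Set.range (FreeAlgebra.ι ℂ))
  rw [FreeAlgebra.adjoin_range_ι, Algebra.map_top,
    (AlgHom.range_eq_top _).2 (RingQuot.mkAlgHom_surjective ℂ (HeisRel q d)), hι] at hmap
  simpa only [Set.image_insert_eq, Set.image_singleton] using hmap.symm

variable {B : Type*} [Ring B] [Algebra ℂ B] {q : ℂ} {d : ℕ} {E K κ η : B}

theorem HeisenbergRelations.lift_eq_of_heisRel (h : HeisenbergRelations (q ^ 2) d E K κ η)
    ⦃x y : FreeAlgebra ℂ (Fin 4)⦄ (hxy : HeisRel q d x y) :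
    FreeAlgebra.lift ℂ ![E, K, κ, η] x = FreeAlgebra.lift ℂ ![E, K, κ, η] y := by
  cases hxy with
  | KE => simpa using h.KE.eq
  | K_pow => simpa using h.K_pow
  | E_pow => simpa using h.E_pow
  | kappa_eta => simpa using h.kappa_eta.eq
  | kappa_pow => simpa using h.kappa_pow
  | eta_pow => simpa using h.eta_pow
  | K_kappa => simpa using h.K_kappa.eq
  | K_eta => simpa using h.K_eta.eq
  | E_kappa => simpa using h.E_kappa.eq
  | E_eta => simpa using h.E_eta

/-- The universal property of the Heisenberg double: elements satisfying its relations define a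
homomorphism out of it. -/
noncomputable def HeisenbergRelations.lift (h : HeisenbergRelations (q ^ 2) d E K κ η) :
    RingQuot (HeisRel q d) →ₐ[ℂ] B :=
  RingQuot.liftAlgHom ℂ ⟨FreeAlgebra.lift ℂ ![E, K, κ, η], h.lift_eq_of_heisRel⟩

theorem HeisenbergRelations.lift_mkAlgHom_ι (h : HeisenbergRelations (q ^ 2) d E K κ η)
    (i : Fin 4) :
    h.lift (RingQuot.mkAlgHom ℂ (HeisRel q d) (FreeAlgebra.ι ℂ i)) = ![E, K, κ, η] i := by
  rw [lift, RingQuot.liftAlgHom_mkAlgHom_apply, FreeAlgebra.lift_ι_apply]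

end Presentation

theorem stmt15_general (d : ℕ) (hd : d ≠ 0) (q : ℂ) (hq : IsPrimitiveRoot (q ^ 2) d) :
    letI H := RingQuot (HeisRel q d)
    let Eh : H := RingQuot.mkAlgHom ℂ (HeisRel q d) (FreeAlgebra.ι ℂ 0)
    let Kh : H := RingQuot.mkAlgHom ℂ (HeisRel q d) (FreeAlgebra.ι ℂ 1)
    let kh : H := RingQuot.mkAlgHom ℂ (HeisRel q d) (FreeAlgebra.ι ℂ 2)
    let eh : H := RingQuot.mkAlgHom ℂ (HeisRel q d) (FreeAlgebra.ι ℂ 3)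
    (Submodule.span ℂ
        {x : H | ∃ i j m n : Fin d,
          x = eh ^ (i : ℕ) * kh ^ (j : ℕ) * Eh ^ (m : ℕ) * Kh ^ (n : ℕ)} = ⊤) ∧
      ∃ τ : H →ₗ[ℂ] H,
        (∀ x y : H, τ (x * y) = τ y * τ x) ∧ τ 1 = 1 ∧
          τ kh = q ^ 2 • kh + (q ^ 2 - 1) • (eh * Eh * Kh ^ (d - 1)) ∧
          τ eh = eh * Kh ^ (d - 1) ∧
          τ Kh = Kh ^ (d - 1) ∧
          τ Eh = -(Eh * Kh ^ (d - 1)) := by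
  intro Eh Kh kh eh
  have h : HeisenbergRelations (q ^ 2) d Eh Kh kh eh := heisenbergRelations_mkAlgHom q d
  have hop := h.opposite hq hd
  refine ⟨h.span_orderedMonomials_eq_top hd (adjoin_mkAlgHom_ι_eq_top q d),
    (opLinearEquiv ℂ).symm.toLinearMap ∘ₗ hop.lift.toLinearMap, fun x y ↦ by simp, by simp,
    ?_, ?_, ?_, ?_⟩
  · rw [mul_assoc]
    exact congrArg unop (hop.lift_mkAlgHom_ι 2)
  · exact congrArg unop (hop.lift_mkAlgHom_ι 3)
  · exact congrArg unop (hop.lift_mkAlgHom_ι 1)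
  · exact congrArg unop (hop.lift_mkAlgHom_ι 0)

/-- in the Heisenberg double `H` of the dual Taft algebra (`q` a
primitive `d`-th root of unity, `d > 1` odd), the monomials `η^i κ^j E^m K^n`
(`0 ≤ i, j, m, n ≤ d-1`) span `H`, and the assignment
`τ(κ) = q²κ + (q²−1)ηEK⁻¹`, `τ(η) = ηK⁻¹`, `τ(K) = K⁻¹`, `τ(E) = −EK⁻¹`
(with `K⁻¹ = K^{d-1}`) extends to an algebra anti-homomorphism `τ : H → H`. -/
theorem stmt15 (d : ℕ) (hd : 1 < d) (hodd : Odd d) (q : ℂ)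
    (hq : IsPrimitiveRoot q d) :
    letI H := RingQuot (HeisRel q d)
    let Eh : H := RingQuot.mkAlgHom ℂ (HeisRel q d) (FreeAlgebra.ι ℂ 0)
    let Kh : H := RingQuot.mkAlgHom ℂ (HeisRel q d) (FreeAlgebra.ι ℂ 1)
    let kh : H := RingQuot.mkAlgHom ℂ (HeisRel q d) (FreeAlgebra.ι ℂ 2)
    let eh : H := RingQuot.mkAlgHom ℂ (HeisRel q d) (FreeAlgebra.ι ℂ 3)
    (Submodule.span ℂ
        {x : H | ∃ i j m n : Fin d,
          x = eh ^ (i : ℕ) * kh ^ (j : ℕ) * Eh ^ (m : ℕ) * Kh ^ (n : ℕ)} = ⊤) ∧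
      ∃ τ : H →ₗ[ℂ] H,
        (∀ x y : H, τ (x * y) = τ y * τ x) ∧ τ 1 = 1 ∧
          τ kh = q ^ 2 • kh + (q ^ 2 - 1) • (eh * Eh * Kh ^ (d - 1)) ∧
          τ eh = eh * Kh ^ (d - 1) ∧
          τ Kh = Kh ^ (d - 1) ∧
          τ Eh = -(Eh * Kh ^ (d - 1)) := by
  exact stmt15_general d (Nat.ne_zero_of_lt hd) q
    (hq.pow_of_coprime 2 (Nat.coprime_two_left.2 hodd))
end
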